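/- There exist a positive constant C and a time T ≥ d_h such that for all t ≥ T, inf_{x ∈ CS(h)} u(x,t) ≥ C t^{-n/2} ‖h‖_{L^∞}. -/

import Mathlib

/-! The energy inside a backward light cone is nonincreasing, so a solution with compactly supported
data is compactly supported at each time, and the Fourier transform in space turns the equation into
the damped oscillators `v'' + v' + 4π²|ξ|²v = 0`. A Lyapunov function bounds each of them by a
constant times `exp(-min(4π²|ξ|², 1)t/4)`. At low frequency the slow mode survives and is asymptotic
to `exp(-4π²|ξ|²t) (v(0) + v'(0))`. Rescaling `ξ = η/√t`, the transforms therefore converge in `L¹`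
to the Gaussian `exp(-4π²|η|²) ∫(f + g)`, that is, `t^{n/2} u(√t y, t)` converges uniformly in `y`
to the heat profile times `∫(f + g) > 0`. The profile is bounded below on the unit ball, and
`|x| ≤ √t` on any bounded set once `t` is large. -/

open Real Set Filter MeasureTheory Metric Pointwise
open scoped Nat Topology

noncomputable section

variable {n : ℕ}

/-- The Laplacian of `v : ℝⁿ → ℝ` at `x`, as the sum of second partial derivatives. -/
def lap (v : EuclideanSpace ℝ (Fin n) → ℝ) (x : EuclideanSpace ℝ (Fin n)) : ℝ :=
  ∑ i : Fin n, iteratedDeriv 2 (fun a : ℝ => v (x + a • EuclideanSpace.single i (1 : ℝ))) 0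

/-- `CS(φ)`: the convex hull of the support of `φ`. -/
def CS (v : EuclideanSpace ℝ (Fin n) → ℝ) : Set (EuclideanSpace ℝ (Fin n)) :=
  convexHull ℝ (tsupport v)

/-- `d_φ`: the diameter of the support of `φ`. -/
def dsupp (v : EuclideanSpace ℝ (Fin n) → ℝ) : ℝ := Metric.diam (tsupport v)

/-- `δ(K,L) = sup_{η ∈ L} dist(η, K)`. -/
def deltaCC (K L : Set (EuclideanSpace ℝ (Fin n))) : ℝ :=
  sSup ((fun η => Metric.infDist η K) '' L)

/-- The centroid `m_h = (∫ h(y) y dy)/(∫ h(y) dy)`. -/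
def centroid (h : EuclideanSpace ℝ (Fin n) → ℝ) : EuclideanSpace ℝ (Fin n) :=
  (∫ y, h y)⁻¹ • ∫ y, h y • y

/-- `T₀(φ) = min{T ≥ 0 : ∀ t ≥ T, t ≥ φ(t) + max{d_h, δ(CS(h),CS(f)) + d_f}}`, `h = f + g`. -/
def T0 (f g : EuclideanSpace ℝ (Fin n) → ℝ) (phi : ℝ → ℝ) : ℝ :=
  sInf {T : ℝ | 0 ≤ T ∧ ∀ t ≥ T,
    phi t + max (dsupp (f + g)) (deltaCC (CS (f + g)) (CS f) + dsupp f) ≤ t}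

/-- Sobolev `W^{ℓ,∞}`-type norm: sum of sup-norms of the iterated derivatives up to order `ℓ`. -/
def sobNorm (ℓ : ℕ) (v : EuclideanSpace ℝ (Fin n) → ℝ) : ℝ :=
  ∑ i ∈ Finset.range (ℓ + 1), ⨆ x, ‖iteratedFDeriv ℝ i v x‖

/-- The `L¹` norm. -/
def L1norm (v : EuclideanSpace ℝ (Fin n) → ℝ) : ℝ := ∫ y, |v y|

/-- The sup norm. -/
def LinfNorm (v : EuclideanSpace ℝ (Fin n) → ℝ) : ℝ := ⨆ x, |v x|

/-- `𝒞(v)`: the critical points of `v` lying in the interior of its support. -/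
def critSet (v : EuclideanSpace ℝ (Fin n) → ℝ) : Set (EuclideanSpace ℝ (Fin n)) :=
  {x | x ∈ interior (tsupport v) ∧ gradient v x = 0}

namespace DampedWave

section HalfSpace

variable {E F : Type*}

variable (E) in
/-- The closed half-space `E × [0, ∞)` of space-time points at nonnegative times. -/
def upperHalf : Set (E × ℝ) := univ ×ˢ Ici 0

theorem mk_mem_upperHalf {x : E} {t : ℝ} (ht : 0 ≤ t) : (x, t) ∈ upperHalf E :=
  ⟨mem_univ x, ht⟩

section Topology

variable [TopologicalSpace E] [TopologicalSpace F]

theorem upperHalf_subset_closure_prod_Ioi :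
    upperHalf E ⊆ closure (univ ×ˢ Ioi (0 : ℝ)) := by
  rw [closure_prod_eq, closure_univ, closure_Ioi, upperHalf]

theorem upperHalf_subset_closure_interior : upperHalf E ⊆ closure (interior (upperHalf E)) := by
  rw [upperHalf, interior_prod_eq, interior_univ, interior_Ici]
  exact upperHalf_subset_closure_prod_Ioi

theorem continuous_slice {V : E × ℝ → F} (hV : ContinuousOn V (upperHalf E)) {t : ℝ} (ht : 0 ≤ t) :
    Continuous fun x => V (x, t) :=
  hV.comp_continuous (by fun_prop) fun _ => mk_mem_upperHalf ht

end Topology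

variable [NormedAddCommGroup E] [NormedSpace ℝ E] [NormedAddCommGroup F] [NormedSpace ℝ F]

theorem uniqueDiffOn_upperHalf : UniqueDiffOn ℝ (upperHalf E) :=
  uniqueDiffOn_univ.prod (uniqueDiffOn_Ici 0)

/-- The derivative along `v` of a function on the closed half-space `E × [0, ∞)`. On the boundary
it is the one-sided derivative from within the half-space. -/
def dirDeriv (v : E × ℝ) (V : E × ℝ → F) (p : E × ℝ) : F :=
  fderivWithin ℝ V (upperHalf E) p v

/-- The time derivative `∂ₜV` on the closed half-space, one-sided at time `0`. -/
abbrev timeDeriv (V : E × ℝ → F) : E × ℝ → F := dirDeriv (0, 1) V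

/-- The spatial partial derivative `∂ᵢV` on the closed half-space. -/
abbrev coordDeriv (i : Fin n) (V : EuclideanSpace ℝ (Fin n) × ℝ → F) :
    EuclideanSpace ℝ (Fin n) × ℝ → F :=
  dirDeriv (EuclideanSpace.single i 1, 0) V

variable {V W : E × ℝ → F} {p v : E × ℝ}

theorem contDiffOn_dirDeriv (hV : ContDiffOn ℝ 2 V (upperHalf E)) (v : E × ℝ) :
    ContDiffOn ℝ 1 (dirDeriv v V) (upperHalf E) :=
  (hV.fderivWithin uniqueDiffOn_upperHalf (by norm_num)).clm_apply contDiffOn_const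

theorem continuousOn_dirDeriv (hV : ContDiffOn ℝ 1 V (upperHalf E)) (v : E × ℝ) :
    ContinuousOn (dirDeriv v V) (upperHalf E) :=
  (hV.continuousOn_fderivWithin uniqueDiffOn_upperHalf le_rfl).clm_apply continuousOn_const

theorem differentiableWithinAt_upperHalf (hV : ContDiffOn ℝ 1 V (upperHalf E))
    (hp : p ∈ upperHalf E) : DifferentiableWithinAt ℝ V (upperHalf E) p :=
  hV.differentiableOn one_ne_zero p hp

theorem dirDeriv_eq_of_hasFDerivWithinAt {L : E × ℝ →L[ℝ] F}
    (hL : HasFDerivWithinAt V L (upperHalf E) p) (hp : p ∈ upperHalf E) :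
    dirDeriv v V p = L v := by
  rw [dirDeriv, hL.fderivWithin (uniqueDiffOn_upperHalf p hp)]

theorem dirDeriv_congr (h : EqOn V W (upperHalf E)) (hp : p ∈ upperHalf E) :
    dirDeriv v V p = dirDeriv v W p := by
  rw [dirDeriv, dirDeriv, fderivWithin_congr h (h hp)]

theorem dirDeriv_clm_comp {G : Type*} [NormedAddCommGroup G] [NormedSpace ℝ G]
    (hV : ContDiffOn ℝ 1 V (upperHalf E)) (L : F →L[ℝ] G)
    (hp : p ∈ upperHalf E) :
    dirDeriv v (fun q => L (V q)) p = L (dirDeriv v V p) :=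
  dirDeriv_eq_of_hasFDerivWithinAt
    (L.hasFDerivAt.comp_hasFDerivWithinAt p
      (differentiableWithinAt_upperHalf hV hp).hasFDerivWithinAt) hp

theorem dirDeriv_smul {𝕜 : Type*} [NormedRing 𝕜] [NormedAlgebra ℝ 𝕜] [Module 𝕜 F]
    [IsBoundedSMul 𝕜 F] [IsScalarTower ℝ 𝕜 F] {c : E × ℝ → 𝕜} (hc : ContDiffOn ℝ 1 c (upperHalf E))
    (hV : ContDiffOn ℝ 1 V (upperHalf E)) (hp : p ∈ upperHalf E) :
    dirDeriv v (fun q => c q • V q) p = c p • dirDeriv v V p + dirDeriv v c p • V p :=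
  dirDeriv_eq_of_hasFDerivWithinAt
    ((differentiableWithinAt_upperHalf hc hp).hasFDerivWithinAt.smul
      (differentiableWithinAt_upperHalf hV hp).hasFDerivWithinAt) hp

theorem dirDeriv_comm (hV : ContDiffOn ℝ 2 V (upperHalf E)) (v w : E × ℝ)
    (hp : p ∈ upperHalf E) :
    dirDeriv v (dirDeriv w V) p = dirDeriv w (dirDeriv v V) p := by
  have hd : DifferentiableWithinAt ℝ (fderivWithin ℝ V (upperHalf E)) (upperHalf E) p :=
    (hV.fderivWithin (m := 1) uniqueDiffOn_upperHalf (by norm_num)).differentiableOn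
      one_ne_zero p hp
  have happly : ∀ a b : E × ℝ, dirDeriv a (dirDeriv b V) p =
      fderivWithin ℝ (fderivWithin ℝ V (upperHalf E)) (upperHalf E) p a b := fun a b =>
    dirDeriv_eq_of_hasFDerivWithinAt
      ((ContinuousLinearMap.apply ℝ F b).hasFDerivAt.comp_hasFDerivWithinAt p
        hd.hasFDerivWithinAt) hp
  rw [happly, happly]
  exact ((hV p hp).isSymmSndFDerivWithinAt (by simp) uniqueDiffOn_upperHalf
    (upperHalf_subset_closure_interior hp) hp).eq v w

theorem hasDerivWithinAt_time (hV : ContDiffOn ℝ 1 V (upperHalf E)) {x : E} {t : ℝ}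
    (ht : 0 ≤ t) :
    HasDerivWithinAt (fun s => V (x, s)) (timeDeriv V (x, t)) (Ici 0) t := by
  have hline : HasDerivWithinAt (fun s : ℝ => (x, s)) ((0 : E), (1 : ℝ)) (Ici 0) t :=
    ((hasDerivAt_const t x).prodMk (hasDerivAt_id t)).hasDerivWithinAt
  exact (differentiableWithinAt_upperHalf hV (mk_mem_upperHalf ht)).hasFDerivWithinAt
    |>.comp_hasDerivWithinAt t hline fun s hs => mk_mem_upperHalf hs

theorem hasDerivAt_time (hV : ContDiffOn ℝ 1 V (upperHalf E)) {x : E} {t : ℝ} (ht : 0 < t) :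
    HasDerivAt (fun s => V (x, s)) (timeDeriv V (x, t)) t :=
  (hasDerivWithinAt_time hV ht.le).hasDerivAt (Ici_mem_nhds ht)

theorem hasDerivAt_space (hV : ContDiffOn ℝ 1 V (upperHalf E)) {x e : E} {t : ℝ} (ht : 0 ≤ t)
    (a : ℝ) :
    HasDerivAt (fun b : ℝ => V (x + b • e, t)) (dirDeriv (e, 0) V (x + a • e, t)) a := by
  have hline : HasDerivAt (fun b : ℝ => (x + b • e, t)) (e, (0 : ℝ)) a := by
    simpa using (((hasDerivAt_id a).smul_const e).const_add x).prodMk (hasDerivAt_const a t)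
  exact hasDerivWithinAt_univ.1
    ((differentiableWithinAt_upperHalf hV (mk_mem_upperHalf ht)).hasFDerivWithinAt
      |>.comp_hasDerivWithinAt a hline.hasDerivWithinAt fun b _ => mk_mem_upperHalf ht)

theorem hasLineDerivAt_space (hV : ContDiffOn ℝ 1 V (upperHalf E)) {x e : E} {t : ℝ}
    (ht : 0 ≤ t) :
    HasLineDerivAt ℝ (fun y => V (y, t)) (dirDeriv (e, 0) V (x, t)) x e := by
  simpa [HasLineDerivAt] using hasDerivAt_space hV (x := x) (e := e) ht 0

end HalfSpace

section LightCone

variable {E F : Type*} [NormedAddCommGroup E] [NormedAddCommGroup F]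
  {V : E × ℝ → F} {c : E} {R t : ℝ}

/-- `V` vanishes, at each time `t ≥ 0`, at distance more than `R + t` from `c`: it is supported in
the forward light cone over the closed ball of radius `R` about `c`. -/
def SupportedInCone (c : E) (R : ℝ) (V : E × ℝ → F) : Prop :=
  ∀ ⦃x : E⦄ ⦃t : ℝ⦄, 0 ≤ t → R + t < dist x c → V (x, t) = 0

theorem SupportedInCone.eq_zero_of_notMem_closedBall (hV : SupportedInCone c R V) {s : ℝ}
    (hs : 0 ≤ s) (hst : s ≤ t) {x : E} (hx : x ∉ closedBall c (R + t)) : V (x, s) = 0 :=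
  hV hs (by rw [mem_closedBall, not_le] at hx; linarith)

protected theorem SupportedInCone.dirDeriv [NormedSpace ℝ E] [NormedSpace ℝ F]
    (hV : SupportedInCone c R V) (v : E × ℝ) : SupportedInCone c R (dirDeriv v V) := by
  intro x t ht hx
  have hnhds : V =ᶠ[𝓝[upperHalf E] (x, t)] fun _ => 0 := by
    have hopen : IsOpen {q : E × ℝ | R + q.2 < dist q.1 c} :=
      isOpen_lt (by fun_prop) (by fun_prop)
    filter_upwards [mem_nhdsWithin_of_mem_nhds (hopen.mem_nhds hx), self_mem_nhdsWithin]
      with q hq hq0 using hV hq0.2 hq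
  rw [dirDeriv, hnhds.fderivWithin_eq (hV ht hx), fderivWithin_const_apply, zero_apply]

theorem SupportedInCone.hasCompactSupport [ProperSpace E] (hV : SupportedInCone c R V)
    (ht : 0 ≤ t) : HasCompactSupport fun x => V (x, t) :=
  HasCompactSupport.intro (isCompact_closedBall c (R + t))
    fun _ hx => hV.eq_zero_of_notMem_closedBall ht le_rfl hx

protected theorem SupportedInCone.smul {𝕜 : Type*} [SMulZeroClass 𝕜 F]
    (hV : SupportedInCone c R V) (a : E × ℝ → 𝕜) : SupportedInCone c R fun p => a p • V p :=
  fun x t ht hx => by simp only [hV ht hx, smul_zero]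

variable [MeasurableSpace E] [BorelSpace E] {μ : Measure E}

section FiniteOnCompacts

variable [ProperSpace E] [IsFiniteMeasureOnCompacts μ]

protected theorem SupportedInCone.integrable (hV : SupportedInCone c R V)
    (hcont : ContinuousOn V (upperHalf E)) (ht : 0 ≤ t) : Integrable (fun x => V (x, t)) μ :=
  (continuous_slice hcont ht).integrable_of_hasCompactSupport (hV.hasCompactSupport ht)

variable [NormedSpace ℝ F]

protected theorem SupportedInCone.continuousOn_integral (hV : SupportedInCone c R V)
    (hcont : ContinuousOn V (upperHalf E)) :
    ContinuousOn (fun t => ∫ x, V (x, t) ∂μ) (Ici 0) := by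
  have hIcc : ∀ T : ℝ, ContinuousOn (fun t => ∫ x, V (x, t) ∂μ) (Icc 0 T) := fun T =>
    continuousOn_integral_of_compact_support (isCompact_closedBall c (R + T))
      (hcont.comp (by fun_prop) fun p hp => mk_mem_upperHalf hp.1.1)
      fun s x hs hx => hV.eq_zero_of_notMem_closedBall hs.1 hs.2 hx
  intro t ht
  refine (hIcc (t + 1) t ⟨ht, by linarith⟩).mono_of_mem_nhdsWithin ?_
  filter_upwards [self_mem_nhdsWithin, mem_nhdsWithin_of_mem_nhds (Iio_mem_nhds (lt_add_one t))]
    with s hs hst using ⟨hs, le_of_lt hst⟩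

variable [NormedSpace ℝ E]

protected theorem SupportedInCone.hasDerivAt_integral (hV : SupportedInCone c R V)
    (hdiff : ContDiffOn ℝ 1 V (upperHalf E)) (ht : 0 < t) :
    HasDerivAt (fun s => ∫ x, V (x, s) ∂μ) (∫ x, timeDeriv V (x, t) ∂μ) t := by
  have hderiv : ContinuousOn (timeDeriv V) (upperHalf E) := continuousOn_dirDeriv hdiff _
  set K : Set E := closedBall c (R + (t + 1))
  have hK : IsCompact K := isCompact_closedBall _ _
  obtain ⟨M, hM⟩ := (hK.prod (isCompact_Icc (a := 0) (b := t + 1))).exists_bound_of_continuousOn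
    (hderiv.mono fun p hp => mk_mem_upperHalf (x := p.1) hp.2.1)
  have hnhds : Ioo 0 (t + 1) ∈ 𝓝 t := Ioo_mem_nhds ht (lt_add_one t)
  refine (hasDerivAt_integral_of_dominated_loc_of_deriv_le (bound := K.indicator fun _ => M)
    (F := fun s x => V (x, s)) (F' := fun s x => timeDeriv V (x, s)) hnhds ?_
    (hV.integrable hdiff.continuousOn ht.le)
    (continuous_slice hderiv ht.le).aestronglyMeasurable ?_
    ((integrable_indicator_iff hK.measurableSet).2 (integrableOn_const hK.measure_ne_top)) ?_).2
  · filter_upwards [hnhds] with s hs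
      using (continuous_slice hdiff.continuousOn hs.1.le).aestronglyMeasurable
  · refine Eventually.of_forall fun x s hs => ?_
    by_cases hx : x ∈ K
    · simpa only [indicator_of_mem hx] using hM (x, s) ⟨hx, hs.1.le, hs.2.le⟩
    · rw [indicator_of_notMem hx, timeDeriv,
        (hV.dirDeriv _).eq_zero_of_notMem_closedBall hs.1.le hs.2.le hx, norm_zero]
  · exact Eventually.of_forall fun x s hs => hasDerivAt_time hdiff hs.1

protected theorem SupportedInCone.hasDerivWithinAt_integral (hV : SupportedInCone c R V)
    (hdiff : ContDiffOn ℝ 1 V (upperHalf E)) (ht : 0 ≤ t) :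
    HasDerivWithinAt (fun s => ∫ x, V (x, s) ∂μ) (∫ x, timeDeriv V (x, t) ∂μ) (Ici 0) t := by
  rcases ht.eq_or_lt with rfl | ht
  · have hderiv := (hV.dirDeriv (0, 1)).continuousOn_integral (μ := μ)
      (continuousOn_dirDeriv hdiff _)
    refine hasDerivWithinAt_Ici_of_tendsto_deriv (s := Ioi 0)
      (fun s hs => (hV.hasDerivAt_integral hdiff hs).differentiableAt.differentiableWithinAt)
      ((hV.continuousOn_integral hdiff.continuousOn 0 self_mem_Ici).mono Ioi_subset_Ici_self)
      self_mem_nhdsWithin ?_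
    refine ((hderiv 0 self_mem_Ici).mono Ioi_subset_Ici_self).tendsto.congr' ?_
    filter_upwards [self_mem_nhdsWithin] with s hs
      using (hV.hasDerivAt_integral hdiff hs).deriv.symm
  · exact (hV.hasDerivAt_integral hdiff ht).hasDerivWithinAt

end FiniteOnCompacts

theorem SupportedInCone.integral_dirDeriv_eq_zero [NormedSpace ℝ E] [FiniteDimensional ℝ E]
    [NormedSpace ℝ F] [μ.IsAddHaarMeasure] (hV : SupportedInCone c R V)
    (hdiff : ContDiffOn ℝ 1 V (upperHalf E)) (ht : 0 ≤ t) (e : E) :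
    ∫ x, dirDeriv (e, 0) V (x, t) ∂μ = 0 := by
  have hint := (hV.dirDeriv (e, 0)).integrable (μ := μ) (continuousOn_dirDeriv hdiff _) ht
  simpa using integral_bilinear_hasLineDerivAt_right_eq_neg_left_of_integrable (μ := μ)
    (f := fun _ => (1 : ℝ)) (f' := fun _ => 0) (B := ContinuousLinearMap.lsmul ℝ ℝ)
    (by simp) (by simpa using hint) (by simpa using hV.integrable hdiff.continuousOn ht)
    (fun x _ => (hasFDerivAt_const (1 : ℝ) x).hasLineDerivAt e)
    fun x _ => hasLineDerivAt_space hdiff ht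

end LightCone

section Solutions

variable {F G : Type*} [NormedAddCommGroup F] [NormedSpace ℝ F]
  [NormedAddCommGroup G] [NormedSpace ℝ G]
  {f g : EuclideanSpace ℝ (Fin n) → F} {U : EuclideanSpace ℝ (Fin n) × ℝ → F}

theorem deriv_deriv_time {E : Type*} [NormedAddCommGroup E] [NormedSpace ℝ E] {U : E × ℝ → F}
    (hU : ContDiffOn ℝ 2 U (upperHalf E)) (x : E) {t : ℝ} (ht : 0 < t) :
    deriv (deriv fun s => U (x, s)) t = timeDeriv (timeDeriv U) (x, t) := by
  have hderiv : deriv (fun s => U (x, s)) =ᶠ[𝓝 t] fun s => timeDeriv U (x, s) := by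
    filter_upwards [Ioi_mem_nhds ht] with s hs
      using (hasDerivAt_time (hU.of_le one_le_two) hs).deriv
  rw [hderiv.deriv_eq, (hasDerivAt_time (contDiffOn_dirDeriv hU _) ht).deriv]

theorem lap_eq_sum_coordDeriv {U : EuclideanSpace ℝ (Fin n) × ℝ → ℝ}
    (hU : ContDiffOn ℝ 2 U (upperHalf _)) (x : EuclideanSpace ℝ (Fin n)) {t : ℝ} (ht : 0 ≤ t) :
    lap (fun z => U (z, t)) x = ∑ i, coordDeriv i (coordDeriv i U) (x, t) := by
  refine Finset.sum_congr rfl fun i _ => ?_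
  have hderiv : deriv (fun a : ℝ => U (x + a • EuclideanSpace.single i (1 : ℝ), t)) =
      fun a => coordDeriv i U (x + a • EuclideanSpace.single i (1 : ℝ), t) :=
    funext fun a => (hasDerivAt_space (hU.of_le one_le_two) ht a).deriv
  rw [iteratedDeriv_succ, iteratedDeriv_one, hderiv,
    (hasDerivAt_space (contDiffOn_dirDeriv hU _) ht 0).deriv, zero_smul, add_zero]

/-- `U` is a `C²` solution on `ℝⁿ × [0, ∞)` of the damped wave equation `∂ₜ²U + ∂ₜU = ΔU` with
initial data `U = f` and `∂ₜU = g`. Derivatives at time `0` are one-sided, and the equation is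
required there too. -/
structure IsDampedWave (f g : EuclideanSpace ℝ (Fin n) → F)
    (U : EuclideanSpace ℝ (Fin n) × ℝ → F) : Prop where
  contDiffOn : ContDiffOn ℝ 2 U (upperHalf _)
  eqn : ∀ ⦃p⦄, p ∈ upperHalf (EuclideanSpace ℝ (Fin n)) →
    timeDeriv (timeDeriv U) p + timeDeriv U p = ∑ i, coordDeriv i (coordDeriv i U) p
  initial : ∀ x, U (x, 0) = f x
  initial_timeDeriv : ∀ x, timeDeriv U (x, 0) = g x

theorem isDampedWave_of_deriv {f g : EuclideanSpace ℝ (Fin n) → ℝ}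
    {U : EuclideanSpace ℝ (Fin n) × ℝ → ℝ} (hU : ContDiffOn ℝ 2 U (upperHalf _))
    (heqn : ∀ x, ∀ t > (0 : ℝ), deriv (deriv fun s => U (x, s)) t - lap (fun z => U (z, t)) x
      + deriv (fun s => U (x, s)) t = 0)
    (hf : ∀ x, U (x, 0) = f x) (hg : ∀ x, derivWithin (fun s => U (x, s)) (Ici 0) 0 = g x) :
    IsDampedWave f g U where
  contDiffOn := hU
  eqn := by
    -- Both sides are continuous up to `t = 0`, so it is enough to treat positive times.
    have hcont : ∀ v w, ContinuousOn (dirDeriv v (dirDeriv w U)) (upperHalf _) := fun v w =>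
      continuousOn_dirDeriv (contDiffOn_dirDeriv hU w) v
    refine EqOn.of_subset_closure (s := univ ×ˢ Ioi 0) ?_
      ((hcont _ _).add (continuousOn_dirDeriv (hU.of_le one_le_two) _))
      (continuousOn_finsetSum _ fun i _ => hcont _ _)
      (prod_mono subset_rfl Ioi_subset_Ici_self) upperHalf_subset_closure_prod_Ioi
    rintro ⟨x, t⟩ ⟨-, ht⟩
    have := heqn x t ht
    rw [deriv_deriv_time hU x ht, lap_eq_sum_coordDeriv hU x (le_of_lt ht),
      (hasDerivAt_time (hU.of_le one_le_two) ht).deriv] at this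
    linarith
  initial := hf
  initial_timeDeriv x := by
    rw [← hg x, (hasDerivWithinAt_time (hU.of_le one_le_two) le_rfl).derivWithin
      (uniqueDiffOn_Ici 0 0 self_mem_Ici)]

theorem dirDeriv_dirDeriv_clm_comp {E : Type*} [NormedAddCommGroup E] [NormedSpace ℝ E]
    {U : E × ℝ → F} (hU : ContDiffOn ℝ 2 U (upperHalf E)) (L : F →L[ℝ] G) {p : E × ℝ}
    (hp : p ∈ upperHalf E) (v w : E × ℝ) :
    dirDeriv v (dirDeriv w fun q => L (U q)) p = L (dirDeriv v (dirDeriv w U) p) := by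
  rw [dirDeriv_congr (fun q hq => dirDeriv_clm_comp (hU.of_le one_le_two) L hq) hp,
    dirDeriv_clm_comp (contDiffOn_dirDeriv hU w) L hp]

theorem IsDampedWave.clm_comp (hU : IsDampedWave f g U) (L : F →L[ℝ] G) :
    IsDampedWave (fun x => L (f x)) (fun x => L (g x)) fun p => L (U p) where
  contDiffOn := L.contDiff.comp_contDiffOn hU.contDiffOn
  eqn p hp := by
    simp only [dirDeriv_dirDeriv_clm_comp hU.contDiffOn L hp,
      dirDeriv_clm_comp (hU.contDiffOn.of_le one_le_two) L hp, ← map_add, ← map_sum, hU.eqn hp]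
  initial x := by rw [hU.initial]
  initial_timeDeriv x := by
    rw [← hU.initial_timeDeriv]
    exact dirDeriv_clm_comp (hU.contDiffOn.of_le one_le_two) L (mk_mem_upperHalf le_rfl)

end Solutions

section FiniteSpeed

open scoped RealInnerProductSpace

variable {E F : Type*} [NormedAddCommGroup E] [NormedAddCommGroup F]

theorem hasDerivAt_max_zero_sq (y : ℝ) :
    HasDerivAt (fun z : ℝ => max z 0 ^ 2) (2 * max y 0) y := by
  rcases lt_trichotomy y 0 with hy | rfl | hy
  · rw [max_eq_right hy.le, mul_zero]
    refine (hasDerivAt_const y (0 : ℝ)).congr_of_eventuallyEq ?_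
    filter_upwards [Iio_mem_nhds hy] with z hz
    simp [max_eq_right (mem_Iio.1 hz).le]
  · rw [max_self, mul_zero, hasDerivAt_iff_isLittleO_nhds_zero]
    have hquad : (fun h : ℝ => max (0 + h) 0 ^ 2 - max (0 : ℝ) 0 ^ 2 - h • (0 : ℝ))
        =O[𝓝 0] fun h : ℝ => h ^ 2 := by
      refine Asymptotics.IsBigO.of_bound 1 (Eventually.of_forall fun h => ?_)
      rcases le_total h 0 with hh | hh <;> simp [hh, sq_nonneg]
    exact hquad.trans_isLittleO (Asymptotics.isLittleO_pow_id one_lt_two)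
  · rw [max_eq_left hy.le]
    refine HasDerivAt.congr_of_eventuallyEq (by simpa using (hasDerivAt_id y).pow 2) ?_
    filter_upwards [Ioi_mem_nhds hy] with z hz
    simp [max_eq_left (mem_Ioi.1 hz).le]

theorem contDiff_max_zero_sq : ContDiff ℝ 1 fun z : ℝ => max z 0 ^ 2 := by
  refine contDiff_one_iff_deriv.2
    ⟨fun y => (hasDerivAt_max_zero_sq y).differentiableAt, ?_⟩
  rw [funext fun y => (hasDerivAt_max_zero_sq y).deriv]
  fun_prop

/-- The positive part of `(R - t)² - |x - c|²`. Before time `R` it is positive exactly in the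
backward light cone with apex `(c, R)`; its square is a `C¹` weight for local energies. -/
def coneHeight (c : E) (R : ℝ) (p : E × ℝ) : ℝ := max ((R - p.2) ^ 2 - ‖p.1 - c‖ ^ 2) 0

variable {c x e : E} {R t s : ℝ}

theorem coneHeight_eq_zero (hR : |R - t| ≤ ‖x - c‖) : coneHeight c R (x, t) = 0 :=
  max_eq_right (sub_nonpos.2 (sq_le_sq.2 (by rwa [abs_norm])))

theorem coneHeight_apex_ne_zero (ht : t ≠ R) : coneHeight c R (c, t) ≠ 0 := by
  simp [coneHeight, sub_eq_zero, ht.symm]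

theorem supportedInCone_coneHeight_sq_smul [NormedSpace ℝ F]
    (hR : 0 ≤ R) (V : E × ℝ → F) :
    SupportedInCone c R fun p => coneHeight c R p ^ 2 • V p := by
  intro x t ht hx
  have hR : |R - t| ≤ ‖x - c‖ := by
    rw [← dist_eq_norm]
    exact (abs_sub_le_of_nonneg_of_le hR (by linarith) ht (by linarith)).trans hx.le
  simp only [coneHeight_eq_zero hR, ne_eq, OfNat.ofNat_ne_zero, not_false_eq_true, zero_pow,
    zero_smul]

variable [InnerProductSpace ℝ E]

theorem contDiff_coneHeight_sq : ContDiff ℝ 1 fun p => coneHeight c R p ^ 2 :=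
  contDiff_max_zero_sq.comp
    (((contDiff_const.sub contDiff_snd).pow 2).sub ((contDiff_fst.sub contDiff_const).norm_sq ℝ))

theorem dirDeriv_coneHeight_sq (ht : 0 ≤ t) :
    dirDeriv (e, s) (fun p => coneHeight c R p ^ 2) (x, t) =
      -4 * coneHeight c R (x, t) * ((R - t) * s + ⟪x - c, e⟫) := by
  have hinner : HasFDerivAt (fun p : E × ℝ => (R - p.2) ^ 2 - ‖p.1 - c‖ ^ 2) _ (x, t) :=
    ((hasFDerivAt_snd.const_sub R).pow 2).sub (hasFDerivAt_fst.sub_const c).norm_sq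
  have hsq : HasFDerivAt (fun p => coneHeight c R p ^ 2) _ (x, t) :=
    (hasDerivAt_max_zero_sq _).comp_hasFDerivAt (x, t) hinner
  rw [dirDeriv_eq_of_hasFDerivWithinAt hsq.hasFDerivWithinAt (mk_mem_upperHalf ht)]
  simp only [Nat.add_one_sub_one, pow_one, nsmul_eq_mul, Nat.cast_ofNat, smul_neg, map_sub,
    ContinuousLinearMap.sub_comp, smul_apply, sub_apply, neg_apply, ContinuousLinearMap.coe_snd',
    smul_eq_mul, ContinuousLinearMap.comp_apply, ContinuousLinearMap.coe_fst',
    coe_innerSL_apply, coneHeight, neg_mul, inner_sub_left]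
  ring

variable [InnerProductSpace ℝ F]

theorem dirDeriv_inner {V W : E × ℝ → F} {p v : E × ℝ} (hV : ContDiffOn ℝ 1 V (upperHalf E))
    (hW : ContDiffOn ℝ 1 W (upperHalf E)) (hp : p ∈ upperHalf E) :
    dirDeriv v (fun q => ⟪V q, W q⟫) p = ⟪dirDeriv v V p, W p⟫ + ⟪V p, dirDeriv v W p⟫ := by
  rw [dirDeriv_eq_of_hasFDerivWithinAt
    ((differentiableWithinAt_upperHalf hV hp).hasFDerivWithinAt.inner ℝ
      (differentiableWithinAt_upperHalf hW hp).hasFDerivWithinAt) hp]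
  simp [dirDeriv, add_comm]

variable {ι : Type*} [Fintype ι]

theorem two_mul_sum_inner_le (y : EuclideanSpace ℝ ι) (a : F) (d : ι → F) {r : ℝ}
    (hy : ‖y‖ ≤ r) :
    2 * ∑ i, y i * ⟪a, d i⟫ ≤ r * (‖a‖ ^ 2 + ∑ i, ‖d i‖ ^ 2) := by
  rcases ((norm_nonneg y).trans hy).eq_or_lt with rfl | hr
  · simp [norm_le_zero_iff.1 hy]
  have hterm : ∀ i, 2 * r * (y i * ⟪a, d i⟫) ≤ ‖y i‖ ^ 2 * ‖a‖ ^ 2 + r ^ 2 * ‖d i‖ ^ 2 := by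
    intro i
    have := norm_sub_sq_real (r • d i) (y i • a)
    rw [norm_smul, norm_smul, real_inner_smul_left, real_inner_smul_right,
      real_inner_comm, Real.norm_of_nonneg hr.le] at this
    nlinarith [sq_nonneg ‖r • d i - y i • a‖]
  have hsum : 2 * r * ∑ i, y i * ⟪a, d i⟫ ≤ r ^ 2 * ‖a‖ ^ 2 + r ^ 2 * ∑ i, ‖d i‖ ^ 2 := calc
    2 * r * ∑ i, y i * ⟪a, d i⟫
      ≤ ∑ i, (‖y i‖ ^ 2 * ‖a‖ ^ 2 + r ^ 2 * ‖d i‖ ^ 2) := by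
        rw [Finset.mul_sum]
        exact Finset.sum_le_sum fun i _ => hterm i
    _ = ‖y‖ ^ 2 * ‖a‖ ^ 2 + r ^ 2 * ∑ i, ‖d i‖ ^ 2 := by
        rw [Finset.sum_add_distrib, ← Finset.sum_mul, ← EuclideanSpace.norm_sq_eq,
          ← Finset.mul_sum]
    _ ≤ r ^ 2 * ‖a‖ ^ 2 + r ^ 2 * ∑ i, ‖d i‖ ^ 2 := by gcongr
  exact le_of_mul_le_mul_left (by linarith) hr

variable {U : EuclideanSpace ℝ (Fin n) × ℝ → F} {f g : EuclideanSpace ℝ (Fin n) → F}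
  {p : EuclideanSpace ℝ (Fin n) × ℝ}

/-- Twice the energy density of a wave, `|∂ₜU|² + |∇U|²`. -/
def energyDensity (U : EuclideanSpace ℝ (Fin n) × ℝ → F) (p : EuclideanSpace ℝ (Fin n) × ℝ) : ℝ :=
  ‖timeDeriv U p‖ ^ 2 + ∑ i, ‖coordDeriv i U p‖ ^ 2

theorem energyDensity_nonneg : 0 ≤ energyDensity U p := by
  unfold energyDensity
  positivity

theorem contDiffOn_energyDensity (hU : ContDiffOn ℝ 2 U (upperHalf _)) :
    ContDiffOn ℝ 1 (energyDensity U) (upperHalf _) :=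
  ((contDiffOn_dirDeriv hU _).norm_sq ℝ).add
    (ContDiffOn.sum fun _ _ => (contDiffOn_dirDeriv hU _).norm_sq ℝ)

/-- The damping term only dissipates. -/
theorem IsDampedWave.timeDeriv_energyDensity_le (hU : IsDampedWave f g U)
    (hp : p ∈ upperHalf _) :
    timeDeriv (energyDensity U) p ≤
      2 * ∑ i, coordDeriv i (fun q => ⟪timeDeriv U q, coordDeriv i U q⟫) p := by
  have hD : ∀ v, ContDiffOn ℝ 1 (dirDeriv v U) (upperHalf _) := contDiffOn_dirDeriv hU.contDiffOn
  have hD' : ∀ v, HasFDerivWithinAt (dirDeriv v U) _ (upperHalf _) p := fun v =>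
    (differentiableWithinAt_upperHalf (hD v) hp).hasFDerivWithinAt
  have hdens : HasFDerivWithinAt (energyDensity U) _ (upperHalf _) p :=
    (hD' _).norm_sq.add (HasFDerivWithinAt.fun_sum fun i (_ : i ∈ Finset.univ) => (hD' _).norm_sq)
  have htime : timeDeriv (energyDensity U) p = 2 * (⟪timeDeriv U p, timeDeriv (timeDeriv U) p⟫ +
      ∑ i, ⟪coordDeriv i U p, timeDeriv (coordDeriv i U) p⟫) := by
    rw [timeDeriv, dirDeriv_eq_of_hasFDerivWithinAt hdens hp]
    simp [dirDeriv, Finset.mul_sum, mul_add]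
  have hspace : ∀ i, coordDeriv i (fun q => ⟪timeDeriv U q, coordDeriv i U q⟫) p =
      ⟪coordDeriv i U p, timeDeriv (coordDeriv i U) p⟫ +
        ⟪timeDeriv U p, coordDeriv i (coordDeriv i U) p⟫ := fun i => by
    rw [coordDeriv, dirDeriv_inner (hD _) (hD _) hp, dirDeriv_comm hU.contDiffOn _ _ hp,
      real_inner_comm]
  have hwave : timeDeriv (timeDeriv U) p =
      ∑ i, coordDeriv i (coordDeriv i U) p - timeDeriv U p := eq_sub_of_add_eq (hU.eqn hp)
  rw [htime, hwave, Finset.sum_congr rfl fun i _ => hspace i, Finset.sum_add_distrib,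
    inner_sub_right, inner_sum, real_inner_self_eq_norm_sq]
  nlinarith [sq_nonneg ‖timeDeriv U p‖]

variable {c x : EuclideanSpace ℝ (Fin n)}

/-- The energy density weighted by the square of `coneHeight c R`. -/
def localEnergy (c : EuclideanSpace ℝ (Fin n)) (R : ℝ) (U : EuclideanSpace ℝ (Fin n) × ℝ → F)
    (p : EuclideanSpace ℝ (Fin n) × ℝ) : ℝ :=
  coneHeight c R p ^ 2 • energyDensity U p

/-- The `i`-th component of the energy flux, `∂ₜU · ∂ᵢU`, weighted by the square of
`coneHeight c R`. -/
def localFlux (c : EuclideanSpace ℝ (Fin n)) (R : ℝ) (U : EuclideanSpace ℝ (Fin n) × ℝ → F)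
    (i : Fin n) (p : EuclideanSpace ℝ (Fin n) × ℝ) : ℝ :=
  coneHeight c R p ^ 2 • ⟪timeDeriv U p, coordDeriv i U p⟫

theorem supportedInCone_localEnergy (hR : 0 ≤ R) : SupportedInCone c R (localEnergy c R U) :=
  supportedInCone_coneHeight_sq_smul hR _

theorem supportedInCone_localFlux (hR : 0 ≤ R) (i : Fin n) :
    SupportedInCone c R (localFlux c R U i) :=
  supportedInCone_coneHeight_sq_smul hR _

theorem contDiffOn_localEnergy (hU : ContDiffOn ℝ 2 U (upperHalf _)) :
    ContDiffOn ℝ 1 (localEnergy c R U) (upperHalf _) :=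
  contDiff_coneHeight_sq.contDiffOn.smul (contDiffOn_energyDensity hU)

theorem contDiffOn_localFlux (hU : ContDiffOn ℝ 2 U (upperHalf _)) (i : Fin n) :
    ContDiffOn ℝ 1 (localFlux c R U i) (upperHalf _) :=
  contDiff_coneHeight_sq.contDiffOn.smul
    ((contDiffOn_dirDeriv hU _).inner ℝ (contDiffOn_dirDeriv hU _))

theorem timeDeriv_localEnergy (hU : ContDiffOn ℝ 2 U (upperHalf _)) (ht : 0 ≤ t) :
    timeDeriv (localEnergy c R U) (x, t) =
      coneHeight c R (x, t) ^ 2 * timeDeriv (energyDensity U) (x, t) -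
        4 * coneHeight c R (x, t) * ((R - t) * energyDensity U (x, t)) := by
  have h := dirDeriv_smul (c := fun p => coneHeight c R p ^ 2) (v := (0, 1))
    contDiff_coneHeight_sq.contDiffOn (contDiffOn_energyDensity hU)
    (mk_mem_upperHalf (x := x) ht)
  rw [dirDeriv_coneHeight_sq ht, inner_zero_right, smul_eq_mul, smul_eq_mul] at h
  exact h.trans (by ring)

theorem coordDeriv_localFlux (hU : ContDiffOn ℝ 2 U (upperHalf _)) (ht : 0 ≤ t) (i : Fin n) :
    coordDeriv i (localFlux c R U i) (x, t) =
      coneHeight c R (x, t) ^ 2 *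
          coordDeriv i (fun p => ⟪timeDeriv U p, coordDeriv i U p⟫) (x, t) -
        4 * coneHeight c R (x, t) *
          ((x - c) i * ⟪timeDeriv U (x, t), coordDeriv i U (x, t)⟫) := by
  have h := dirDeriv_smul (c := fun p => coneHeight c R p ^ 2)
    (v := (EuclideanSpace.single i 1, 0)) contDiff_coneHeight_sq.contDiffOn
    ((contDiffOn_dirDeriv hU (0, 1)).inner ℝ
      (contDiffOn_dirDeriv hU (EuclideanSpace.single i 1, 0)))
    (mk_mem_upperHalf (x := x) ht)
  rw [dirDeriv_coneHeight_sq ht, EuclideanSpace.inner_single_right, smul_eq_mul, smul_eq_mul] at h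
  refine h.trans ?_
  simp only [neg_mul, mul_zero, PiLp.sub_apply, ringHom_apply, one_mul, zero_add]
  ring

/-- The flux through the sides of the backward cone is absorbed by the decrease of the weight. -/
theorem IsDampedWave.timeDeriv_localEnergy_le (hU : IsDampedWave f g U) (ht : 0 ≤ t)
    (htR : t ≤ R) :
    timeDeriv (localEnergy c R U) (x, t) ≤ 2 * ∑ i, coordDeriv i (localFlux c R U i) (x, t) := by
  have hdens := mul_le_mul_of_nonneg_left
    (hU.timeDeriv_energyDensity_le (mk_mem_upperHalf (x := x) ht))
    (sq_nonneg (coneHeight c R (x, t)))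
  have hflux : coneHeight c R (x, t) *
        (2 * ∑ i, (x - c) i * ⟪timeDeriv U (x, t), coordDeriv i U (x, t)⟫) ≤
      coneHeight c R (x, t) * ((R - t) * energyDensity U (x, t)) := by
    rcases le_or_gt ‖x - c‖ (R - t) with hx | hx
    · exact mul_le_mul_of_nonneg_left (two_mul_sum_inner_le _ _ _ hx) (le_max_right _ _)
    · simp [coneHeight_eq_zero ((abs_of_nonneg (sub_nonneg.2 htR)).trans_le hx.le)]
  rw [timeDeriv_localEnergy hU.contDiffOn ht,
    Finset.sum_congr rfl fun i _ => coordDeriv_localFlux hU.contDiffOn ht i,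
    Finset.sum_sub_distrib, ← Finset.mul_sum, ← Finset.mul_sum]
  linarith

section Domain

variable (hU : IsDampedWave f g U)

include hU

theorem IsDampedWave.integral_timeDeriv_localEnergy_nonpos (ht : t ∈ Icc 0 R) :
    ∫ x, timeDeriv (localEnergy c R U) (x, t) ≤ 0 := by
  have hR : 0 ≤ R := ht.1.trans ht.2
  have hint : ∀ i, Integrable fun x => coordDeriv i (localFlux c R U i) (x, t) := fun i =>
    ((supportedInCone_localFlux hR i).dirDeriv _).integrable
      (continuousOn_dirDeriv (contDiffOn_localFlux hU.contDiffOn i) _) ht.1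
  calc ∫ x, timeDeriv (localEnergy c R U) (x, t)
      ≤ ∫ x, 2 * ∑ i, coordDeriv i (localFlux c R U i) (x, t) :=
        integral_mono (((supportedInCone_localEnergy hR).dirDeriv _).integrable
          (continuousOn_dirDeriv (contDiffOn_localEnergy hU.contDiffOn) _) ht.1)
          ((integrable_finsetSum _ fun i _ => hint i).const_mul 2)
          fun x => hU.timeDeriv_localEnergy_le ht.1 ht.2
    _ = 0 := by
        rw [integral_const_mul, integral_finsetSum _ fun i _ => hint i,
          Finset.sum_eq_zero fun i _ => (supportedInCone_localFlux hR i).integral_dirDeriv_eq_zero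
            (contDiffOn_localFlux hU.contDiffOn i) ht.1 _, mul_zero]

theorem IsDampedWave.antitoneOn_integral_localEnergy (hR : 0 ≤ R) :
    AntitoneOn (fun t => ∫ x, localEnergy c R U (x, t)) (Icc 0 R) := by
  have hdiff := contDiffOn_localEnergy (c := c) (R := R) hU.contDiffOn
  have hcone := supportedInCone_localEnergy (c := c) (U := U) hR
  refine antitoneOn_of_hasDerivWithinAt_nonpos (convex_Icc 0 R)
    ((hcone.continuousOn_integral hdiff.continuousOn).mono Icc_subset_Ici_self)
    (fun t ht => (hcone.hasDerivAt_integral hdiff ?_).hasDerivWithinAt)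
    fun t ht => hU.integral_timeDeriv_localEnergy_nonpos (interior_subset ht)
  exact (interior_Icc.subset ht).1

variable (hf : ∀ y ∈ ball c R, f y = 0) (hg : ∀ y ∈ ball c R, g y = 0)

include hf hg

theorem IsDampedWave.energyDensity_initial_eq_zero (hx : x ∈ ball c R) :
    energyDensity U (x, 0) = 0 := by
  have hspace : ∀ i, coordDeriv i U (x, 0) = 0 := fun i => by
    have hnear : (fun y => U (y, 0)) =ᶠ[𝓝 x] fun _ => 0 := by
      filter_upwards [isOpen_ball.mem_nhds hx] with y hy using (hU.initial y).trans (hf y hy)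
    rw [coordDeriv, ← (hasLineDerivAt_space (hU.contDiffOn.of_le one_le_two) le_rfl).lineDeriv,
      hnear.lineDeriv_eq, ((hasFDerivAt_const (0 : F) x).hasLineDerivAt _).lineDeriv, zero_apply]
  rw [energyDensity, hU.initial_timeDeriv, hg x hx]
  simp [hspace]

theorem IsDampedWave.integral_localEnergy_eq_zero (ht : t ∈ Icc 0 R) :
    ∫ x, localEnergy c R U (x, t) = 0 := by
  have hR : 0 ≤ R := ht.1.trans ht.2
  have hinit : ∫ x, localEnergy c R U (x, 0) = 0 := by
    refine integral_eq_zero_of_ae (Eventually.of_forall fun x => ?_)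
    by_cases hx : x ∈ ball c R
    · simp [localEnergy, hU.energyDensity_initial_eq_zero hf hg hx]
    · have hx : |R - 0| ≤ ‖x - c‖ := by
        rwa [sub_zero, abs_of_nonneg hR, ← dist_eq_norm, ← not_lt]
      simp [localEnergy, coneHeight_eq_zero hx]
  exact le_antisymm
    (hinit ▸ hU.antitoneOn_integral_localEnergy hR (left_mem_Icc.2 hR) ht ht.1)
    (integral_nonneg fun x => smul_nonneg (sq_nonneg _) energyDensity_nonneg)

theorem IsDampedWave.timeDeriv_axis_eq_zero (ht : t ∈ Ico 0 R) : timeDeriv U (c, t) = 0 := by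
  have hcont : Continuous fun x => localEnergy c R U (x, t) :=
    continuous_slice (contDiffOn_localEnergy hU.contDiffOn).continuousOn ht.1
  have hae : (fun x => localEnergy c R U (x, t)) =ᵐ[volume] 0 :=
    (integral_eq_zero_iff_of_nonneg
      (fun x => smul_nonneg (sq_nonneg _) energyDensity_nonneg)
      (hcont.integrable_of_hasCompactSupport
        ((supportedInCone_localEnergy (ht.1.trans ht.2.le)).hasCompactSupport ht.1))).1
      (hU.integral_localEnergy_eq_zero hf hg (Ico_subset_Icc_self ht))
  have haxis : localEnergy c R U (c, t) = 0 :=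
    congrFun ((hcont.ae_eq_iff_eq volume continuous_zero).1 hae) c
  have hdens : energyDensity U (c, t) = 0 :=
    (smul_eq_zero.1 haxis).resolve_left (pow_ne_zero _ (coneHeight_apex_ne_zero ht.2.ne))
  rw [energyDensity, add_eq_zero_iff_of_nonneg (by positivity) (by positivity)] at hdens
  exact norm_eq_zero.1 (pow_eq_zero_iff two_ne_zero |>.1 hdens.1)

theorem IsDampedWave.apex_eq_zero (hR : 0 < R) : U (c, R) = 0 := by
  have hdiff := hU.contDiffOn.of_le one_le_two
  rw [← hf c (mem_ball_self hR), ← hU.initial]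
  refine constant_of_has_deriv_right_zero (f := fun s => U (c, s)) (fun s hs =>
    (hasDerivWithinAt_time hdiff hs.1).continuousWithinAt.mono Icc_subset_Ici_self)
    (fun s hs => ?_) R (right_mem_Icc.2 hR.le)
  rw [← hU.timeDeriv_axis_eq_zero hf hg hs]
  exact (hasDerivWithinAt_time hdiff hs.1).mono (Ici_subset_Ici.2 hs.1)

end Domain

theorem IsDampedWave.supportedInCone (hU : IsDampedWave f g U)
    (hf : ∀ x ∉ closedBall c R, f x = 0) (hg : ∀ x ∉ closedBall c R, g x = 0) :
    SupportedInCone c R U := by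
  intro x t ht hx
  have hball : ∀ y ∈ ball x t, y ∉ closedBall c R := fun y hy hyc => by
    rw [mem_ball] at hy
    rw [mem_closedBall] at hyc
    linarith [dist_triangle_left x c y]
  rcases ht.eq_or_lt with rfl | ht
  · rw [hU.initial, hf x (by rw [mem_closedBall]; linarith)]
  · exact hU.apex_eq_zero (fun y hy => hf y (hball y hy)) (fun y hy => hg y (hball y hy)) ht

end FiniteSpeed

section Oscillator

theorem le_exp_mul_of_hasDerivWithinAt_le {y y' : ℝ → ℝ} {κ t : ℝ}
    (hy : ∀ s, 0 ≤ s → HasDerivWithinAt y (y' s) (Ici 0) s)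
    (hle : ∀ s, 0 ≤ s → y' s ≤ -κ * y s) (ht : 0 ≤ t) : y t ≤ exp (-κ * t) * y 0 := by
  have hderiv : ∀ s, 0 ≤ s → HasDerivWithinAt (fun s => exp (κ * s) * y s)
      (exp (κ * s) * κ * y s + exp (κ * s) * y' s) (Ici 0) s := fun s hs =>
    ((hasDerivAt_const_mul κ).exp.hasDerivWithinAt).mul (hy s hs)
  have hanti : AntitoneOn (fun s => exp (κ * s) * y s) (Ici 0) := by
    refine antitoneOn_of_hasDerivWithinAt_nonpos (convex_Ici 0)
      (fun s hs => (hderiv s hs).continuousWithinAt)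
      (fun s hs => (hderiv s (interior_subset hs)).mono interior_subset) fun s hs => ?_
    rw [mul_assoc, ← mul_add]
    exact mul_nonpos_of_nonneg_of_nonpos (exp_pos _).le (by linarith [hle s (interior_subset hs)])
  have hmono : exp (κ * t) * y t ≤ y 0 := by simpa using hanti self_mem_Ici ht ht
  rwa [neg_mul, exp_neg, ← div_eq_inv_mul, le_div_iff₀' (exp_pos _)]

variable {V : Type*} [NormedAddCommGroup V]

theorem eq_exp_smul_of_hasDerivWithinAt [NormedSpace ℝ V] {z : ℝ → V} {σ t : ℝ}
    (hz : ∀ s, 0 ≤ s → HasDerivWithinAt z (-σ • z s) (Ici 0) s) (ht : 0 ≤ t) :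
    z t = exp (-σ * t) • z 0 := by
  have hderiv : ∀ s, 0 ≤ s → HasDerivWithinAt (fun s => exp (σ * s) • z s) 0 (Ici 0) s := by
    intro s hs
    refine ((hasDerivAt_const_mul σ).exp.hasDerivWithinAt.smul (hz s hs)).congr_deriv ?_
    rw [smul_smul, ← add_smul]
    simp
  have hconst : exp (σ * t) • z t = z 0 := by
    simpa using constant_of_has_deriv_right_zero
      (fun s hs => (hderiv s hs.1).continuousWithinAt.mono Icc_subset_Ici_self)
      (fun s hs => (hderiv s hs.1).mono (Ici_subset_Ici.2 hs.1)) t (right_mem_Icc.2 ht)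
  rw [← hconst, smul_smul, ← exp_add, neg_mul, neg_add_cancel, exp_zero, one_smul]

/-- `v` is a trajectory on `[0, ∞)`, with velocity `w`, of the damped oscillator
`v'' + v' + a v = 0` of stiffness `a`. -/
structure IsOscillator [NormedSpace ℝ V] (a : ℝ) (v w : ℝ → V) : Prop where
  hasDerivWithinAt : ∀ ⦃t⦄, 0 ≤ t → HasDerivWithinAt v (w t) (Ici 0) t
  hasDerivWithinAt_velocity : ∀ ⦃t⦄, 0 ≤ t → HasDerivWithinAt w (-w t - a • v t) (Ici 0) t

section Modes

variable [NormedSpace ℝ V] {a ρ σ t : ℝ} {v w : ℝ → V}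

theorem IsOscillator.velocity_add_smul (h : IsOscillator a v w) (hadd : ρ + σ = 1)
    (hmul : ρ * σ = a) (ht : 0 ≤ t) :
    w t + ρ • v t = exp (-σ * t) • (w 0 + ρ • v 0) := by
  refine eq_exp_smul_of_hasDerivWithinAt (z := fun s => w s + ρ • v s) (fun s hs => ?_) ht
  refine ((h.hasDerivWithinAt_velocity hs).add
    ((h.hasDerivWithinAt hs).const_smul ρ)).congr_deriv ?_
  rw [← hmul, eq_sub_of_add_eq hadd]
  module

theorem IsOscillator.smul_eq (h : IsOscillator a v w) (hadd : ρ + σ = 1) (hmul : ρ * σ = a)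
    (ht : 0 ≤ t) :
    (ρ - σ) • v t = exp (-σ * t) • (w 0 + ρ • v 0) - exp (-ρ * t) • (w 0 + σ • v 0) := by
  rw [← h.velocity_add_smul hadd hmul ht,
    ← h.velocity_add_smul ((add_comm σ ρ).trans hadd) ((mul_comm σ ρ).trans hmul) ht]
  module

/-- As the stiffness tends to `0`, the fast mode dies out and the slow mode decays at a rate
asymptotic to the stiffness. -/
theorem tendsto_isOscillator {ι : Type*} {l : Filter ι} {a τ : ι → ℝ} {v w : ι → ℝ → V}
    {s : ℝ} {v₀ w₀ : V} (h : ∀ i, IsOscillator (a i) (v i) (w i)) (ha : Tendsto a l (𝓝 0))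
    (hτ : Tendsto τ l atTop) (haτ : Tendsto (fun i => a i * τ i) l (𝓝 s))
    (hv : Tendsto (fun i => v i 0) l (𝓝 v₀)) (hw : Tendsto (fun i => w i 0) l (𝓝 w₀)) :
    Tendsto (fun i => v i (τ i)) l (𝓝 (exp (-s) • (w₀ + v₀))) := by
  set δ : ι → ℝ := fun i => √(1 - 4 * a i)
  set ρ : ι → ℝ := fun i => (1 + δ i) / 2
  set σ : ι → ℝ := fun i => (1 - δ i) / 2
  have hδ : Tendsto δ l (𝓝 1) := by simpa using ((ha.const_mul 4).const_sub 1).sqrt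
  have hρ : Tendsto ρ l (𝓝 1) := by simpa using (hδ.const_add 1).div_const 2
  have hσ : Tendsto σ l (𝓝 0) := by simpa using (hδ.const_sub 1).div_const 2
  have hmul : ∀ᶠ i in l, ρ i * σ i = a i := by
    filter_upwards [ha.eventually_le_const (show (0 : ℝ) < 1 / 4 by norm_num)] with i hi
    have hsq : δ i ^ 2 = 1 - 4 * a i := sq_sqrt (by linarith)
    linear_combination -hsq / 4
  have hslow : Tendsto (fun i => -σ i * τ i) l (𝓝 (-s)) := by
    have hquot : Tendsto (fun i => -(a i * τ i / ρ i)) l (𝓝 (-s)) := by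
      simpa using (haτ.div hρ one_ne_zero).neg
    refine hquot.congr' ?_
    filter_upwards [hmul, hρ.eventually_ne one_ne_zero] with i hi hρi
    rw [← hi]
    field_simp
  have hfast : Tendsto (fun i => exp (-ρ i * τ i)) l (𝓝 0) := by
    refine tendsto_exp_atBot.comp ?_
    simpa only [neg_mul, Function.comp_def] using
      tendsto_neg_atTop_atBot.comp (hρ.pos_mul_atTop one_pos hτ)
  have hmodes := ((hslow.rexp.smul (hw.add (hρ.smul hv))).sub
    (hfast.smul (hw.add (hσ.smul hv))))
  have hlim := (hδ.inv₀ one_ne_zero).smul hmodes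
  rw [zero_smul, sub_zero, inv_one, one_smul, one_smul] at hlim
  refine hlim.congr' ?_
  filter_upwards [hmul, hδ.eventually_ne one_ne_zero, hτ.eventually_ge_atTop 0] with i hi hδi hτi
  rw [← (h i).smul_eq (by ring) hi hτi, smul_smul, show ρ i - σ i = δ i by ring,
    inv_mul_cancel₀ hδi, one_smul]

end Modes

section Decay

variable [InnerProductSpace ℝ V] {a t : ℝ} {v w : ℝ → V}

/-- The quadratic form in position and velocity whose derivative along the trajectories of the
oscillator is `-(‖w‖² + a ‖v‖²)`. The cross term makes it decay even though friction acts on the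
velocity only. -/
def lyapunov (a : ℝ) (x y : V) : ℝ := ‖y + (1 / 2 : ℝ) • x‖ ^ 2 + (1 / 4 + a) * ‖x‖ ^ 2

theorem IsOscillator.hasDerivWithinAt_lyapunov (h : IsOscillator a v w) (ht : 0 ≤ t) :
    HasDerivWithinAt (fun s => lyapunov a (v s) (w s)) (-(‖w t‖ ^ 2 + a * ‖v t‖ ^ 2))
      (Ici 0) t := by
  have hv := h.hasDerivWithinAt ht
  refine (((h.hasDerivWithinAt_velocity ht).add (hv.const_smul (1 / 2 : ℝ))).norm_sq.add
    (hv.norm_sq.const_mul (1 / 4 + a))).congr_deriv ?_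
  simp only [Pi.add_apply, Pi.smul_apply, inner_add_left, inner_add_right, inner_sub_right,
    inner_neg_right, real_inner_smul_left, real_inner_smul_right, real_inner_self_eq_norm_sq,
    real_inner_comm (w t) (v t)]
  ring

theorem lyapunov_le (a : ℝ) (x y : V) :
    lyapunov a x y ≤ 3 / 2 * ‖y‖ ^ 2 + (1 + a) * ‖x‖ ^ 2 := by
  rw [lyapunov, norm_add_sq_real, norm_smul, real_inner_smul_right, norm_of_nonneg one_half_pos.le]
  linarith [norm_sub_sq_real y x, sq_nonneg ‖y - x‖]

theorem min_mul_lyapunov_le (ha : 0 ≤ a) (x y : V) :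
    min a 1 / 2 * lyapunov a x y ≤ ‖y‖ ^ 2 + a * ‖x‖ ^ 2 := by
  have hx : min a 1 / 2 * (1 + a) ≤ a := by
    rcases le_total a 1 with h | h
    · rw [min_eq_left h]; nlinarith
    · rw [min_eq_right h]; linarith
  calc min a 1 / 2 * lyapunov a x y
      ≤ min a 1 / 2 * (3 / 2 * ‖y‖ ^ 2 + (1 + a) * ‖x‖ ^ 2) := by gcongr; exact lyapunov_le a x y
    _ = 3 / 4 * min a 1 * ‖y‖ ^ 2 + min a 1 / 2 * (1 + a) * ‖x‖ ^ 2 := by ring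
    _ ≤ 1 * ‖y‖ ^ 2 + a * ‖x‖ ^ 2 := by gcongr; linarith [min_le_right a 1]
    _ = ‖y‖ ^ 2 + a * ‖x‖ ^ 2 := by ring

theorem IsOscillator.norm_le (h : IsOscillator a v w) (ha : 0 ≤ a) (ht : 0 ≤ t) :
    ‖v t‖ ≤ 3 * (‖v 0‖ + ‖w 0‖) * exp (-(min a 1 / 4) * t) := by
  have hdecay : lyapunov a (v t) (w t) ≤ exp (-(min a 1 / 2) * t) * lyapunov a (v 0) (w 0) :=
    le_exp_mul_of_hasDerivWithinAt_le (fun s hs => h.hasDerivWithinAt_lyapunov hs)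
      (fun s _ => by linarith [min_mul_lyapunov_le ha (v s) (w s)]) ht
  have hexp : exp (-(min a 1 / 2) * t) = exp (-(min a 1 / 4) * t) ^ 2 := by
    rw [← exp_nat_mul]
    ring_nf
  have hinit : lyapunov a (v 0) (w 0) ≤ (1 / 4 + a) * (3 * (‖v 0‖ + ‖w 0‖)) ^ 2 := by
    refine (lyapunov_le _ _ _).trans ?_
    nlinarith [mul_nonneg ha (sq_nonneg ‖w 0‖), mul_nonneg ha (sq_nonneg ‖v 0‖),
      mul_nonneg (norm_nonneg (v 0)) (norm_nonneg (w 0)), sq_nonneg ‖v 0‖, sq_nonneg ‖w 0‖,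
      mul_nonneg ha (mul_nonneg (norm_nonneg (v 0)) (norm_nonneg (w 0)))]
  have hsq : (1 / 4 + a) * ‖v t‖ ^ 2 ≤
      (1 / 4 + a) * (3 * (‖v 0‖ + ‖w 0‖) * exp (-(min a 1 / 4) * t)) ^ 2 := calc
    (1 / 4 + a) * ‖v t‖ ^ 2 ≤ lyapunov a (v t) (w t) := le_add_of_nonneg_left (sq_nonneg _)
    _ ≤ exp (-(min a 1 / 4) * t) ^ 2 * ((1 / 4 + a) * (3 * (‖v 0‖ + ‖w 0‖)) ^ 2) :=
      hexp ▸ hdecay.trans (by gcongr)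
    _ = _ := by ring
  exact le_of_sq_le_sq (le_of_mul_le_mul_left hsq (by positivity)) (by positivity)

end Decay

end Oscillator

section Asymptotics

theorem tendsto_integral_norm_sub_of_norm_le_add {α ι V : Type*} [MeasurableSpace α]
    {μ : Measure α} [NormedAddCommGroup V] {l : Filter ι} [l.IsCountablyGenerated]
    {F : ι → α → V} {f : α → V} {b : α → ℝ} {r : ι → α → ℝ}
    (hF : ∀ᶠ i in l, AEStronglyMeasurable (F i) μ) (hf : Integrable f μ) (hb : Integrable b μ)
    (hr : ∀ᶠ i in l, Integrable (r i) μ) (hr_nonneg : ∀ᶠ i in l, ∀ x, 0 ≤ r i x)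
    (hr_lim : Tendsto (fun i => ∫ x, r i x ∂μ) l (𝓝 0))
    (hle : ∀ᶠ i in l, ∀ x, ‖F i x‖ ≤ b x + r i x)
    (hlim : ∀ᵐ x ∂μ, Tendsto (fun i => F i x) l (𝓝 (f x))) :
    Tendsto (fun i => ∫ x, ‖F i x - f x‖ ∂μ) l (𝓝 0) := by
  -- The errors `r i` need not be dominated, so dominated convergence is applied to the excess.
  set d : ι → α → ℝ := fun i x => max (‖F i x - f x‖ - r i x) 0
  have hd_meas : ∀ᶠ i in l, AEStronglyMeasurable (d i) μ := by
    filter_upwards [hF, hr] with i hFi hri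
      using ((hFi.sub hf.1).norm.sub hri.1).sup aestronglyMeasurable_const
  have hd_le : ∀ᶠ i in l, ∀ᵐ x ∂μ, ‖d i x‖ ≤ |b x| + ‖f x‖ := by
    filter_upwards [hle] with i hi
    refine Eventually.of_forall fun x => ?_
    rw [Real.norm_of_nonneg (le_max_right _ _)]
    refine max_le ?_ (by positivity)
    linarith [hi x, norm_sub_le (F i x) (f x), le_abs_self (b x)]
  have hd_lim : ∀ᵐ x ∂μ, Tendsto (fun i => d i x) l (𝓝 0) := by
    filter_upwards [hlim] with x hx
    refine squeeze_zero' (Eventually.of_forall fun i => le_max_right _ _) ?_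
      (tendsto_iff_norm_sub_tendsto_zero.1 hx)
    filter_upwards [hr_nonneg] with i hi using max_le (by linarith [hi x]) (norm_nonneg _)
  have hd : Tendsto (fun i => ∫ x, d i x ∂μ) l (𝓝 0) := by
    simpa using tendsto_integral_filter_of_dominated_convergence _ hd_meas hd_le
      (hb.abs.add hf.norm) hd_lim
  refine squeeze_zero' (Eventually.of_forall fun i => integral_nonneg fun x => norm_nonneg _) ?_
    (by simpa using hd.add hr_lim)
  filter_upwards [hd_meas, hd_le, hr] with i hmeas hdi hri
  have hint : Integrable (d i) μ := (hb.abs.add hf.norm).mono' hmeas hdi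
  rw [← integral_add hint hri]
  exact integral_mono_of_nonneg (Eventually.of_forall fun x => norm_nonneg _) (hint.add hri)
    (Eventually.of_forall fun x => sub_le_iff_le_add.1 (le_max_left _ _))

theorem exp_min_mul_le (a b s : ℝ) : exp (min a b * s) ≤ exp (a * s) + exp (b * s) := by
  rcases min_choice a b with h | h <;> rw [h] <;> linarith [exp_pos (a * s), exp_pos (b * s)]

theorem tendsto_sqrt_pow_mul_exp_neg_mul (d : ℕ) {b : ℝ} (hb : 0 < b) :
    Tendsto (fun t => √t ^ d * exp (-b * t)) atTop (𝓝 0) := by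
  refine (tendsto_rpow_mul_exp_neg_mul_atTop_nhds_zero (d / 2) b hb).congr' ?_
  filter_upwards [eventually_ge_atTop 0] with t ht
  rw [sqrt_eq_rpow, ← rpow_natCast, ← rpow_mul ht, one_div_mul_eq_div]

variable {E V : Type*} [NormedAddCommGroup E] [InnerProductSpace ℝ E]

theorem integrable_exp_neg_mul_norm_sq [FiniteDimensional ℝ E] [MeasurableSpace E] [BorelSpace E]
    {c : ℝ} (hc : 0 < c) : Integrable fun η : E => exp (-(c * ‖η‖ ^ 2)) := by
  have h := GaussianFourier.integrable_cexp_neg_mul_sq_norm_add (V := E) (b := c)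
    (by simpa using hc) 0 0
  refine h.norm.congr (Eventually.of_forall fun η => ?_)
  simp [Complex.norm_exp, ← Complex.ofReal_pow]

theorem tendsto_inv_sqrt_smul (η : E) : Tendsto (fun t : ℝ => (√t)⁻¹ • η) atTop (𝓝 0) := by
  simpa using (tendsto_inv_atTop_zero.comp tendsto_sqrt_atTop).smul_const η

variable [NormedAddCommGroup V] [InnerProductSpace ℝ V] {c t M : ℝ} {v w : E → ℝ → V}

theorem mul_norm_inv_sqrt_smul_sq_mul (c : ℝ) (ht : 0 < t) (η : E) :
    c * ‖(√t)⁻¹ • η‖ ^ 2 * t = c * ‖η‖ ^ 2 := by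
  rw [norm_smul, mul_pow, norm_inv, norm_of_nonneg (sqrt_nonneg t), inv_pow, sq_sqrt ht.le]
  field_simp

/-- The slow modes obey the heat bound, and the fast ones decay exponentially in `t`. -/
theorem norm_oscillator_rescaled_le
    (hosc : ∀ ξ, IsOscillator (c * ‖ξ‖ ^ 2) (v ξ) (w ξ)) (hc : 0 ≤ c)
    (hM : ∀ ξ, ‖v ξ 0‖ + ‖w ξ 0‖ ≤ M) (ht : 0 < t) (η : E) :
    ‖v ((√t)⁻¹ • η) t‖ ≤ 3 * M * exp (-(c / 4 * ‖η‖ ^ 2)) +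
      3 * (‖v ((√t)⁻¹ • η) 0‖ + ‖w ((√t)⁻¹ • η) 0‖) * exp (-(1 / 4) * t) := by
  set ξ : E := (√t)⁻¹ • η
  have hscale : c * ‖ξ‖ ^ 2 * t = c * ‖η‖ ^ 2 := mul_norm_inv_sqrt_smul_sq_mul c ht η
  calc ‖v ξ t‖
      ≤ 3 * (‖v ξ 0‖ + ‖w ξ 0‖) * exp (-(min (c * ‖ξ‖ ^ 2) 1 / 4) * t) :=
        (hosc ξ).norm_le (by positivity) ht.le
    _ = 3 * (‖v ξ 0‖ + ‖w ξ 0‖) * exp (min (c * ‖ξ‖ ^ 2) 1 * (-t / 4)) := by ring_nf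
    _ ≤ 3 * (‖v ξ 0‖ + ‖w ξ 0‖) *
          (exp (c * ‖ξ‖ ^ 2 * (-t / 4)) + exp (1 * (-t / 4))) := by
        gcongr; exact exp_min_mul_le _ _ _
    _ = 3 * (‖v ξ 0‖ + ‖w ξ 0‖) * exp (-(c / 4 * ‖η‖ ^ 2)) +
          3 * (‖v ξ 0‖ + ‖w ξ 0‖) * exp (-(1 / 4) * t) := by
        rw [mul_add, show c * ‖ξ‖ ^ 2 * (-t / 4) = -(c / 4 * ‖η‖ ^ 2) by linarith,
          show 1 * (-t / 4) = -(1 / 4) * t by ring]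
    _ ≤ _ := by gcongr; exact hM ξ

theorem tendsto_oscillator_rescaled
    (hosc : ∀ ξ, IsOscillator (c * ‖ξ‖ ^ 2) (v ξ) (w ξ))
    (hv : ContinuousAt (fun ξ => v ξ 0) 0) (hw : ContinuousAt (fun ξ => w ξ 0) 0) (η : E) :
    Tendsto (fun t => v ((√t)⁻¹ • η) t) atTop
      (𝓝 (exp (-(c * ‖η‖ ^ 2)) • (w 0 0 + v 0 0))) := by
  have hξ := tendsto_inv_sqrt_smul η
  refine tendsto_isOscillator (fun t => hosc ((√t)⁻¹ • η)) ?_ tendsto_id ?_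
    (hv.tendsto.comp hξ) (hw.tendsto.comp hξ)
  · simpa using (hξ.norm.pow 2).const_mul c
  · refine tendsto_const_nhds.congr' ?_
    filter_upwards [eventually_gt_atTop 0] with t ht
      using (mul_norm_inv_sqrt_smul_sq_mul c ht η).symm

variable [FiniteDimensional ℝ E] [MeasurableSpace E] [BorelSpace E]

theorem tendsto_integral_norm_oscillator_rescaled_sub
    (hosc : ∀ ξ, IsOscillator (c * ‖ξ‖ ^ 2) (v ξ) (w ξ)) (hc : 0 < c)
    (hv : ∀ t ≥ 0, Continuous fun ξ => v ξ t) (hw : Continuous fun ξ => w ξ 0)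
    (hM : ∀ ξ, ‖v ξ 0‖ + ‖w ξ 0‖ ≤ M)
    (hv_int : Integrable fun ξ => v ξ 0) (hw_int : Integrable fun ξ => w ξ 0) :
    Tendsto (fun t => ∫ η, ‖v ((√t)⁻¹ • η) t - exp (-(c * ‖η‖ ^ 2)) • (w 0 0 + v 0 0)‖)
      atTop (𝓝 0) := by
  set r : ℝ → E → ℝ := fun t η =>
    3 * (‖v ((√t)⁻¹ • η) 0‖ + ‖w ((√t)⁻¹ • η) 0‖) * exp (-(1 / 4) * t) with hr
  have hdata : Integrable fun ξ => ‖v ξ 0‖ + ‖w ξ 0‖ := hv_int.norm.add hw_int.norm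
  have hr_lim : Tendsto (fun t => ∫ η, r t η) atTop (𝓝 0) := by
    have hlim := (tendsto_sqrt_pow_mul_exp_neg_mul (Module.finrank ℝ E)
      (one_div_pos.2 four_pos)).mul_const (3 * ∫ ξ, (‖v ξ 0‖ + ‖w ξ 0‖))
    rw [zero_mul] at hlim
    refine hlim.congr fun t => ?_
    rw [hr, integral_mul_const, integral_const_mul, Measure.integral_comp_inv_smul_of_nonneg
      volume (fun ξ => ‖v ξ 0‖ + ‖w ξ 0‖) (sqrt_nonneg t), smul_eq_mul]
    ring
  refine tendsto_integral_norm_sub_of_norm_le_add (r := r)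
    (b := fun η => 3 * M * exp (-(c / 4 * ‖η‖ ^ 2))) ?_
    ((integrable_exp_neg_mul_norm_sq hc).smul_const _)
    ((integrable_exp_neg_mul_norm_sq (by positivity)).const_mul _) ?_
    (Eventually.of_forall fun t η => by positivity) hr_lim ?_
    (Eventually.of_forall
      (tendsto_oscillator_rescaled hosc (hv 0 le_rfl).continuousAt hw.continuousAt))
  · filter_upwards [eventually_ge_atTop 0] with t ht
      using ((hv t ht).comp (by fun_prop)).aestronglyMeasurable
  · filter_upwards [eventually_gt_atTop 0] with t ht
      using ((hdata.comp_smul (inv_ne_zero (sqrt_pos.2 ht).ne')).const_mul 3).mul_const _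
  · filter_upwards [eventually_gt_atTop 0] with t ht
      using norm_oscillator_rescaled_le hosc hc.le hM ht

end Asymptotics

open scoped FourierTransform InnerProductSpace

section FourierTransform

variable {E F : Type*} [NormedAddCommGroup E] [InnerProductSpace ℝ E]
  [NormedAddCommGroup F] [NormedSpace ℂ F] {V : E × ℝ → F} {c : E} {R t : ℝ}

/-- The kernel `e^{-2πi⟪x, ξ⟫}` of the Fourier transform at frequency `ξ`, as a function on
space-time that does not depend on time. -/
def fourierKernel (ξ : E) (p : E × ℝ) : ℂ := 𝐞 (-⟪p.1, ξ⟫_ℝ)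

theorem contDiff_fourierKernel {m : WithTop ℕ∞} (ξ : E) : ContDiff ℝ m (fourierKernel ξ) := by
  unfold fourierKernel
  have hphase : ContDiff ℝ m fun p : E × ℝ => 2 * π * -⟪p.1, ξ⟫_ℝ :=
    contDiff_const.mul (contDiff_fst.inner ℝ contDiff_const).neg
  simp only [Real.fourierChar_apply]
  exact ((Complex.ofRealCLM.contDiff.comp hphase).mul contDiff_const).cexp

theorem dirDeriv_fourierKernel (ξ : E) (v : E × ℝ) {p : E × ℝ} (hp : p ∈ upperHalf E) :
    dirDeriv v (fourierKernel ξ) p = -(2 * π * Complex.I * ⟪v.1, ξ⟫_ℝ) * fourierKernel ξ p := by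
  have hphase : HasFDerivAt (fun q : E × ℝ => -⟪q.1, ξ⟫_ℝ)
      (-((innerSL ℝ ξ).comp (ContinuousLinearMap.fst ℝ E ℝ))) p := by
    simp only [real_inner_comm ξ]
    exact ((innerSL ℝ ξ).comp (ContinuousLinearMap.fst ℝ E ℝ)).hasFDerivAt.neg
  have h : HasFDerivAt (fourierKernel ξ) _ p :=
    (Real.hasDerivAt_fourierChar _).hasFDerivAt.comp p hphase
  rw [dirDeriv_eq_of_hasFDerivWithinAt h.hasFDerivWithinAt hp]
  simp only [real_inner_comm, ContinuousLinearMap.comp_neg, neg_apply,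
    ContinuousLinearMap.comp_apply, ContinuousLinearMap.coe_fst', coe_innerSL_apply,
    ContinuousLinearMap.toSpanSingleton_apply, Complex.real_smul, fourierKernel, neg_mul, neg_inj]
  ring

theorem dirDeriv_fourierKernel_smul (hV : ContDiffOn ℝ 1 V (upperHalf E)) (ξ : E) (v : E × ℝ)
    {p : E × ℝ} (hp : p ∈ upperHalf E) :
    dirDeriv v (fun q => fourierKernel ξ q • V q) p =
      fourierKernel ξ p • dirDeriv v V p -
        (2 * π * Complex.I * ⟪v.1, ξ⟫_ℝ) • fourierKernel ξ p • V p := by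
  rw [dirDeriv_smul (contDiff_fourierKernel ξ).contDiffOn hV hp, dirDeriv_fourierKernel ξ v hp,
    neg_mul, neg_smul, ← sub_eq_add_neg, mul_smul]

variable [FiniteDimensional ℝ E] [MeasurableSpace E] [BorelSpace E]

theorem fourier_slice (V : E × ℝ → F) (t : ℝ) (ξ : E) :
    𝓕 (fun x => V (x, t)) ξ = ∫ x, fourierKernel ξ (x, t) • V (x, t) := rfl

theorem SupportedInCone.integrable_fourierKernel_smul (hV : SupportedInCone c R V)
    (hcont : ContinuousOn V (upperHalf E)) (ht : 0 ≤ t) (ξ : E) :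
    Integrable fun x => fourierKernel ξ (x, t) • V (x, t) :=
  (hV.smul (fourierKernel ξ)).integrable
    ((contDiff_fourierKernel (m := 0) ξ).continuous.continuousOn.smul hcont) ht

theorem SupportedInCone.hasDerivWithinAt_fourier (hV : SupportedInCone c R V)
    (hdiff : ContDiffOn ℝ 1 V (upperHalf E)) (ht : 0 ≤ t) (ξ : E) :
    HasDerivWithinAt (fun s => 𝓕 (fun x => V (x, s)) ξ) (𝓕 (fun x => timeDeriv V (x, t)) ξ)
      (Ici 0) t := by
  refine ((hV.smul (fourierKernel ξ)).hasDerivWithinAt_integral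
    ((contDiff_fourierKernel ξ).contDiffOn.smul hdiff) ht).congr_deriv ?_
  simp [timeDeriv, fourier_slice, dirDeriv_fourierKernel_smul hdiff ξ _ (mk_mem_upperHalf ht)]

theorem SupportedInCone.fourier_dirDeriv (hV : SupportedInCone c R V)
    (hdiff : ContDiffOn ℝ 1 V (upperHalf E)) (ht : 0 ≤ t) (e ξ : E) :
    𝓕 (fun x => dirDeriv (e, 0) V (x, t)) ξ =
      (2 * π * Complex.I * ⟪e, ξ⟫_ℝ) • 𝓕 (fun x => V (x, t)) ξ := by
  have hzero := (hV.smul (fourierKernel ξ)).integral_dirDeriv_eq_zero (μ := volume)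
    ((contDiff_fourierKernel ξ).contDiffOn.smul hdiff) ht e
  simp only [dirDeriv_fourierKernel_smul hdiff ξ (e, 0) (mk_mem_upperHalf ht)] at hzero
  have hint := hV.integrable_fourierKernel_smul hdiff.continuousOn ht ξ
  have hint' := (hV.dirDeriv (e, 0)).integrable_fourierKernel_smul
    (continuousOn_dirDeriv hdiff _) ht ξ
  rw [← sub_eq_zero, fourier_slice, fourier_slice, ← integral_smul,
    ← integral_sub hint' (hint.fun_smul _)]
  exact hzero

theorem fourier_sum_coordDeriv_coordDeriv {V : EuclideanSpace ℝ (Fin n) × ℝ → F}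
    {c : EuclideanSpace ℝ (Fin n)} (hV : SupportedInCone c R V)
    (hdiff : ContDiffOn ℝ 2 V (upperHalf _)) (ht : 0 ≤ t) (ξ : EuclideanSpace ℝ (Fin n)) :
    𝓕 (fun x => ∑ i, coordDeriv i (coordDeriv i V) (x, t)) ξ =
      -((4 * π ^ 2 * ‖ξ‖ ^ 2) • 𝓕 (fun x => V (x, t)) ξ) := by
  have hcoord : ∀ i, 𝓕 (fun x => coordDeriv i (coordDeriv i V) (x, t)) ξ =
      (-(4 * π ^ 2 * ξ i ^ 2)) • 𝓕 (fun x => V (x, t)) ξ := fun i => by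
    rw [(hV.dirDeriv _).fourier_dirDeriv (contDiffOn_dirDeriv hdiff _) ht,
      hV.fourier_dirDeriv (hdiff.of_le one_le_two) ht, smul_smul, ← Complex.coe_smul,
      EuclideanSpace.inner_single_left, map_one, one_mul]
    congr 1
    push_cast
    linear_combination (4 * π ^ 2 * (ξ i : ℂ) ^ 2) * Complex.I_sq
  have hsum : 𝓕 (fun x => ∑ i, coordDeriv i (coordDeriv i V) (x, t)) ξ =
      ∑ i, 𝓕 (fun x => coordDeriv i (coordDeriv i V) (x, t)) ξ := by
    simp only [fourier_slice]
    rw [← integral_finsetSum _ fun i _ =>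
      ((hV.dirDeriv _).dirDeriv _).integrable_fourierKernel_smul
        (continuousOn_dirDeriv (contDiffOn_dirDeriv hdiff _) _) ht ξ]
    simp only [← Finset.smul_sum]
    rfl
  rw [hsum, Finset.sum_congr rfl fun i _ => hcoord i, ← Finset.sum_smul, Finset.sum_neg_distrib,
    ← Finset.mul_sum, ← EuclideanSpace.real_norm_sq_eq, neg_smul]

theorem IsDampedWave.isOscillator_fourier {U : EuclideanSpace ℝ (Fin n) × ℝ → F}
    {f g : EuclideanSpace ℝ (Fin n) → F} {c : EuclideanSpace ℝ (Fin n)}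
    (hU : IsDampedWave f g U) (hsupp : SupportedInCone c R U) (ξ : EuclideanSpace ℝ (Fin n)) :
    IsOscillator (4 * π ^ 2 * ‖ξ‖ ^ 2) (fun t => 𝓕 (fun x => U (x, t)) ξ)
      (fun t => 𝓕 (fun x => timeDeriv U (x, t)) ξ) where
  hasDerivWithinAt t ht :=
    hsupp.hasDerivWithinAt_fourier (hU.contDiffOn.of_le one_le_two) ht ξ
  hasDerivWithinAt_velocity t ht := by
    have hd := contDiffOn_dirDeriv hU.contDiffOn (0, 1)
    refine ((hsupp.dirDeriv _).hasDerivWithinAt_fourier hd ht ξ).congr_deriv ?_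
    have heqn := fourier_sum_coordDeriv_coordDeriv hsupp hU.contDiffOn ht ξ
    have hadd : 𝓕 (fun x => timeDeriv (timeDeriv U) (x, t) + timeDeriv U (x, t)) ξ =
        𝓕 (fun x => timeDeriv (timeDeriv U) (x, t)) ξ + 𝓕 (fun x => timeDeriv U (x, t)) ξ := by
      simp only [fourier_slice]
      rw [← integral_add
        (((hsupp.dirDeriv _).dirDeriv _).integrable_fourierKernel_smul
          (continuousOn_dirDeriv hd _) ht ξ)
        ((hsupp.dirDeriv _).integrable_fourierKernel_smul hd.continuousOn ht ξ)]
      simp only [← smul_add]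
      rfl
    simp only [← hU.eqn (mk_mem_upperHalf ht), hadd] at heqn
    rw [eq_sub_of_add_eq heqn, sub_eq_add_neg, add_comm, ← sub_eq_add_neg]

end FourierTransform

section DiffusionPhenomenon

variable {E : Type*} [NormedAddCommGroup E] [InnerProductSpace ℝ E]

/-- The self-similar profile of the heat kernel: the heat kernel at time `t` is
`x ↦ (√t)⁻ⁿ * heatProfile ((√t)⁻¹ • x)`. -/
def heatProfile (y : E) : ℝ :=
  (4 * π) ^ (-(Module.finrank ℝ E : ℝ) / 2) * exp (-‖y‖ ^ 2 / 4)

theorem heatProfile_ge_of_norm_le_one {y : E} (hy : ‖y‖ ≤ 1) :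
    (4 * π) ^ (-(Module.finrank ℝ E : ℝ) / 2) * exp (-1 / 4) ≤ heatProfile y := by
  unfold heatProfile
  gcongr
  exact pow_le_one₀ (norm_nonneg y) hy

variable [FiniteDimensional ℝ E] [MeasurableSpace E] [BorelSpace E]

theorem continuous_fourier {v : E → ℂ} (hv : Integrable v) : Continuous (𝓕 v) :=
  VectorFourier.fourierIntegral_continuous Real.continuous_fourierChar
    (by exact continuous_inner) hv

theorem norm_fourier_le_integral_norm (v : E → ℂ) (ξ : E) : ‖𝓕 v ξ‖ ≤ ∫ x, ‖v x‖ :=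
  VectorFourier.norm_fourierIntegral_le_integral_norm _ _ _ _ _

theorem norm_fourierInv_sub_le {v w : E → ℂ} (hv : Integrable v) (hw : Integrable w) (y : E) :
    ‖𝓕⁻ v y - 𝓕⁻ w y‖ ≤ ∫ η, ‖v η - w η‖ := by
  have hint : ∀ {v : E → ℂ}, Integrable v → Integrable fun η => 𝐞 ⟪η, y⟫_ℝ • v η := fun hv => by
    simpa using (VectorFourier.fourierIntegral_convergent_iff Real.continuous_fourierChar
      (L := innerₗ E) (by exact continuous_inner) (-y)).2 hv
  rw [Real.fourierInv_eq, Real.fourierInv_eq, ← integral_sub (hint hv) (hint hw)]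
  simp only [← smul_sub]
  exact (norm_integral_le_integral_norm _).trans_eq (by simp only [Circle.norm_smul])

theorem tendstoUniformly_fourierInv {ι : Type*} {l : Filter ι} {G : ι → E → ℂ} {G₀ : E → ℂ}
    (hG : ∀ᶠ i in l, Integrable (G i)) (hG₀ : Integrable G₀)
    (hlim : Tendsto (fun i => ∫ η, ‖G i η - G₀ η‖) l (𝓝 0)) :
    TendstoUniformly (fun i => 𝓕⁻ (G i)) (𝓕⁻ G₀) l := by
  rw [Metric.tendstoUniformly_iff]
  intro ε hε
  filter_upwards [hG, hlim.eventually_lt_const hε] with i hi hlt y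
  rw [dist_comm, dist_eq_norm]
  exact (norm_fourierInv_sub_le hi hG₀ y).trans_lt hlt

theorem fourierInv_comp_inv_smul (v : E → ℂ) {r : ℝ} (hr : 0 < r) (y : E) :
    𝓕⁻ (fun η => v (r⁻¹ • η)) y = r ^ Module.finrank ℝ E • 𝓕⁻ v (r • y) := by
  rw [Real.fourierInv_eq, Real.fourierInv_eq,
    ← Measure.integral_comp_inv_smul_of_nonneg volume _ hr.le]
  simp only [inner_smul_left, inner_smul_right, conj_trivial, mul_inv_cancel_left₀ hr.ne']

theorem fourierInv_gaussian_smul (z : ℂ) (y : E) :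
    𝓕⁻ (fun η : E => exp (-(4 * π ^ 2 * ‖η‖ ^ 2)) • z) y = heatProfile y • z := by
  have hb : 0 < ((4 * π ^ 2 : ℝ) : ℂ).re := by rw [Complex.ofReal_re]; positivity
  have hbase : π / (4 * π ^ 2) = (4 * π)⁻¹ := by field_simp
  have hexp : -π ^ 2 * ‖y‖ ^ 2 / (4 * π ^ 2) = -‖y‖ ^ 2 / 4 := by field_simp
  have hvalue : heatProfile y = (π / (4 * π ^ 2)) ^ ((Module.finrank ℝ E : ℝ) / 2) *
      exp (-π ^ 2 * ‖y‖ ^ 2 / (4 * π ^ 2)) := by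
    rw [heatProfile, hbase, hexp, inv_rpow (by positivity), ← rpow_neg (by positivity), neg_div]
  have hg := fourier_gaussian_innerProductSpace hb (-y)
  rw [← Real.fourierInv_eq_fourier_neg, norm_neg, Real.fourierInv_eq] at hg
  simp only [Real.fourierInv_eq, Complex.real_smul, ← smul_mul_assoc, integral_mul_const, hvalue,
    Complex.ofReal_mul, Complex.ofReal_cpow (show 0 ≤ π / (4 * π ^ 2) by positivity)]
  congr 1
  push_cast at hg ⊢
  simpa only [neg_mul] using hg

theorem integrable_slice_of_isOscillator {v w : E → ℝ → ℂ} {c : ℝ}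
    (hosc : ∀ ξ, IsOscillator (c * ‖ξ‖ ^ 2) (v ξ) (w ξ)) (hc : 0 ≤ c) {t : ℝ} (ht : 0 ≤ t)
    (hv : Continuous fun ξ => v ξ t)
    (hv_int : Integrable fun ξ => v ξ 0) (hw_int : Integrable fun ξ => w ξ 0) :
    Integrable fun ξ => v ξ t := by
  refine ((hv_int.norm.add hw_int.norm).const_mul 3).mono' hv.aestronglyMeasurable
    (Eventually.of_forall fun ξ => ((hosc ξ).norm_le (by positivity) ht).trans ?_)
  refine mul_le_of_le_one_right (by positivity) (exp_le_one_iff.2 ?_)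
  have : 0 ≤ min (c * ‖ξ‖ ^ 2) 1 := by positivity
  nlinarith

variable {f g : EuclideanSpace ℝ (Fin n) → ℂ} {U : EuclideanSpace ℝ (Fin n) × ℝ → ℂ}
  {c : EuclideanSpace ℝ (Fin n)} {R t : ℝ}

theorem IsDampedWave.fourier_initial (hU : IsDampedWave f g U) :
    𝓕 (fun x => U (x, 0)) = 𝓕 f := by
  simp only [hU.initial]

theorem IsDampedWave.fourier_initial_timeDeriv (hU : IsDampedWave f g U) :
    𝓕 (fun x => timeDeriv U (x, 0)) = 𝓕 g := by
  simp only [hU.initial_timeDeriv]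

theorem IsDampedWave.continuous_fourier (hU : IsDampedWave f g U)
    (hsupp : SupportedInCone c R U) (ht : 0 ≤ t) : Continuous (𝓕 fun x => U (x, t)) :=
  DampedWave.continuous_fourier (hsupp.integrable hU.contDiffOn.continuousOn ht)

theorem IsDampedWave.integrable_fourier (hU : IsDampedWave f g U)
    (hsupp : SupportedInCone c R U) (hf : Integrable (𝓕 f)) (hg : Integrable (𝓕 g))
    (ht : 0 ≤ t) : Integrable (𝓕 fun x => U (x, t)) :=
  integrable_slice_of_isOscillator (fun ξ => hU.isOscillator_fourier hsupp ξ) (by positivity) ht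
    (hU.continuous_fourier hsupp ht) (hU.fourier_initial ▸ hf)
    (hU.fourier_initial_timeDeriv ▸ hg)

theorem IsDampedWave.fourierInv_fourier_rescaled (hU : IsDampedWave f g U)
    (hsupp : SupportedInCone c R U) (hf : Integrable (𝓕 f)) (hg : Integrable (𝓕 g))
    (ht : 0 < t) (y : EuclideanSpace ℝ (Fin n)) :
    𝓕⁻ (fun η => 𝓕 (fun x => U (x, t)) ((√t)⁻¹ • η)) y = √t ^ n • U (√t • y, t) := by
  have hcont := hU.contDiffOn.continuousOn
  rw [fourierInv_comp_inv_smul _ (sqrt_pos.2 ht), finrank_euclideanSpace_fin,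
    (continuous_slice hcont ht.le).fourierInv_fourier_eq (hsupp.integrable hcont ht.le)
      (hU.integrable_fourier hsupp hf hg ht.le)]

theorem IsDampedWave.tendsto_integral_norm_fourier_rescaled_sub (hU : IsDampedWave f g U)
    (hsupp : SupportedInCone c R U) (hf : Integrable (𝓕 f)) (hg : Integrable (𝓕 g)) :
    Tendsto (fun t => ∫ η, ‖𝓕 (fun x => U (x, t)) ((√t)⁻¹ • η) -
      exp (-(4 * π ^ 2 * ‖η‖ ^ 2)) • ∫ x, (f x + g x)‖) atTop (𝓝 0) := by
  have hUi := hsupp.integrable (μ := volume) hU.contDiffOn.continuousOn le_rfl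
  have hVi := (hsupp.dirDeriv (0, 1)).integrable (μ := volume)
    (contDiffOn_dirDeriv hU.contDiffOn _).continuousOn le_rfl
  have hmass : 𝓕 (fun x => timeDeriv U (x, 0)) 0 + 𝓕 (fun x => U (x, 0)) 0 =
      ∫ x, (f x + g x) := by
    simp only [← hU.initial, ← hU.initial_timeDeriv]
    rw [integral_add hUi hVi, add_comm]
    simp only [Real.fourier_eq, inner_zero_right, neg_zero, AddChar.map_zero_eq_one, one_smul]
  rw [← hmass]
  exact tendsto_integral_norm_oscillator_rescaled_sub (c := 4 * π ^ 2)
    (fun ξ => hU.isOscillator_fourier hsupp ξ) (by positivity)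
    (fun t ht => hU.continuous_fourier hsupp ht) (DampedWave.continuous_fourier hVi)
    (fun ξ => add_le_add (norm_fourier_le_integral_norm _ ξ) (norm_fourier_le_integral_norm _ ξ))
    (hU.fourier_initial ▸ hf) (hU.fourier_initial_timeDeriv ▸ hg)

theorem IsDampedWave.tendstoUniformly_rescaled (hU : IsDampedWave f g U)
    (hsupp : SupportedInCone c R U) (hf : Integrable (𝓕 f)) (hg : Integrable (𝓕 g)) :
    TendstoUniformly (fun t y => √t ^ n • U (√t • y, t))
      (fun y => heatProfile y • ∫ x, (f x + g x)) atTop := by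
  simp only [← fourierInv_gaussian_smul]
  refine (tendstoUniformly_congr ?_).1 (tendstoUniformly_fourierInv ?_
    ((integrable_exp_neg_mul_norm_sq (by positivity)).smul_const _)
    (hU.tendsto_integral_norm_fourier_rescaled_sub hsupp hf hg))
  · filter_upwards [eventually_gt_atTop 0] with t ht
      using funext (hU.fourierInv_fourier_rescaled hsupp hf hg ht)
  · filter_upwards [eventually_gt_atTop 0] with t ht
      using (hU.integrable_fourier hsupp hf hg ht.le).comp_smul (inv_ne_zero (sqrt_pos.2 ht).ne')

end DiffusionPhenomenon

section LowerBound

variable {f g : EuclideanSpace ℝ (Fin n) → ℝ} {U : EuclideanSpace ℝ (Fin n) × ℝ → ℝ}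

theorem IsDampedWave.exists_supportedInCone (hU : IsDampedWave f g U)
    (hfc : HasCompactSupport f) (hgc : HasCompactSupport g) :
    ∃ R, SupportedInCone 0 R U := by
  obtain ⟨R, hR⟩ := (hfc.isCompact.union hgc.isCompact).isBounded.subset_closedBall 0
  exact ⟨R, hU.supportedInCone
    (fun x hx => image_eq_zero_of_notMem_tsupport fun hxf => hx (hR (Or.inl hxf)))
    fun x hx => image_eq_zero_of_notMem_tsupport fun hxg => hx (hR (Or.inr hxg))⟩

theorem IsDampedWave.tendstoUniformly_rescaled_real (hU : IsDampedWave f g U)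
    (hfc : HasCompactSupport f) (hgc : HasCompactSupport g)
    (hf : Integrable (𝓕 fun x => (f x : ℂ))) (hg : Integrable (𝓕 fun x => (g x : ℂ))) :
    TendstoUniformly (fun t y => √t ^ n * U (√t • y, t))
      (fun y => heatProfile y * ∫ x, (f x + g x)) atTop := by
  obtain ⟨R, hsupp⟩ := hU.exists_supportedInCone hfc hgc
  have hsupp' : SupportedInCone 0 R fun p => (U p : ℂ) := fun x t ht hx => by
    simp only [hsupp ht hx, Complex.ofReal_zero]
  have h := Complex.uniformContinuous_re.comp_tendstoUniformly
    ((hU.clm_comp Complex.ofRealCLM).tendstoUniformly_rescaled hsupp' hf hg)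
  simpa only [Function.comp_def, Complex.ofRealCLM_apply, Complex.smul_re, Complex.ofReal_re,
    ← Complex.ofReal_add, integral_complex_ofReal, smul_eq_mul] using h

theorem rpow_neg_div_two_eq_inv_sqrt_pow (n : ℕ) {t : ℝ} (ht : 0 ≤ t) :
    t ^ (-(n : ℝ) / 2) = (√t ^ n)⁻¹ := by
  rw [sqrt_eq_rpow, ← rpow_natCast, ← rpow_mul ht, ← rpow_neg ht]
  ring_nf

theorem IsDampedWave.exists_pos_eventually_mul_rpow_le (hU : IsDampedWave f g U)
    (hfc : HasCompactSupport f) (hgc : HasCompactSupport g)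
    (hf : Integrable (𝓕 fun x => (f x : ℂ))) (hg : Integrable (𝓕 fun x => (g x : ℂ)))
    (hpos : 0 < ∫ x, (f x + g x)) :
    ∃ C > (0 : ℝ), ∀ᶠ t in atTop, ∀ x, ‖x‖ ≤ √t → C * t ^ (-(n : ℝ) / 2) ≤ U (x, t) := by
  set m : ℝ := (4 * π) ^ (-(n : ℝ) / 2) * exp (-1 / 4) * ∫ x, (f x + g x)
  have hm : 0 < m := by positivity
  have hprofile : ∀ y : EuclideanSpace ℝ (Fin n), ‖y‖ ≤ 1 →
      m ≤ heatProfile y * ∫ x, (f x + g x) := fun y hy => by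
    have := heatProfile_ge_of_norm_le_one hy
    rw [finrank_euclideanSpace_fin] at this
    exact mul_le_mul_of_nonneg_right this hpos.le
  refine ⟨m / 2, half_pos hm, ?_⟩
  filter_upwards [Metric.tendstoUniformly_iff.1
    (hU.tendstoUniformly_rescaled_real hfc hgc hf hg) (m / 2) (half_pos hm),
    eventually_gt_atTop 0] with t hclose ht x hx
  have hsqrt : 0 < √t := sqrt_pos.2 ht
  set y := (√t)⁻¹ • x
  have hy : ‖y‖ ≤ 1 := by
    rwa [norm_smul, norm_inv, norm_of_nonneg hsqrt.le, inv_mul_le_one₀ hsqrt]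
  have hxy : √t • y = x := smul_inv_smul₀ hsqrt.ne' x
  have hU_ge : m / 2 ≤ √t ^ n * U (√t • y, t) := by
    have := (abs_lt.1 (hclose y)).2
    linarith [hprofile y hy]
  rwa [rpow_neg_div_two_eq_inv_sqrt_pow n ht.le, ← div_eq_mul_inv, div_le_iff₀' (by positivity),
    ← hxy]

theorem integrable_fourier_ofReal (hf : ContDiff ℝ (⊤ : ℕ∞) f) (hfc : HasCompactSupport f) :
    Integrable (𝓕 fun x => (f x : ℂ)) := by
  have hc : HasCompactSupport fun x => (f x : ℂ) :=
    hfc.comp_left (g := fun y : ℝ => (y : ℂ)) Complex.ofReal_zero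
  have hs : ContDiff ℝ (⊤ : ℕ∞) fun x => (f x : ℂ) := Complex.ofRealCLM.contDiff.comp hf
  exact (𝓕 (hc.toSchwartzMap hs)).integrable

end LowerBound

end DampedWave

open scoped FourierTransform in
theorem lower_bound_on_convex_hull_general {f g : EuclideanSpace ℝ (Fin n) → ℝ}
    (hfc : HasCompactSupport f) (hgc : HasCompactSupport g)
    (hf : Integrable (𝓕 fun x => (f x : ℂ))) (hg : Integrable (𝓕 fun x => (g x : ℂ)))
    (hpos : 0 < ∫ x, (f x + g x))
    {K : Set (EuclideanSpace ℝ (Fin n))} (hK : Bornology.IsBounded K)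
    (u : EuclideanSpace ℝ (Fin n) → ℝ → ℝ)
    (hreg : ContDiffOn ℝ 2 (fun p : EuclideanSpace ℝ (Fin n) × ℝ => u p.1 p.2) (univ ×ˢ Ici 0))
    (hpde : ∀ x, ∀ t > (0 : ℝ),
      deriv (deriv (fun s => u x s)) t - lap (fun z => u z t) x
        + deriv (fun s => u x s) t = 0)
    (hu0 : ∀ x, u x 0 = f x)
    (hu1 : ∀ x, derivWithin (fun s => u x s) (Ici 0) 0 = g x) :
    ∃ C > (0 : ℝ), ∃ T, dsupp (f + g) ≤ T ∧ ∀ t ≥ T, ∀ x ∈ K,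
      C * t ^ (-(n : ℝ) / 2) * LinfNorm (f + g) ≤ u x t := by
  have hU := DampedWave.isDampedWave_of_deriv hreg hpde hu0 hu1
  obtain ⟨C, hC, hbound⟩ := hU.exists_pos_eventually_mul_rpow_le hfc hgc hf hg hpos
  obtain ⟨r, hr⟩ := hK.subset_closedBall 0
  obtain ⟨T, hT⟩ := eventually_atTop.1 (hbound.and
    ((tendsto_sqrt_atTop.eventually_ge_atTop r).and (eventually_ge_atTop 0)))
  have hL : 0 ≤ LinfNorm (f + g) := Real.iSup_nonneg fun x => abs_nonneg _
  have hCL : C / (LinfNorm (f + g) + 1) * LinfNorm (f + g) ≤ C := by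
    rw [div_mul_eq_mul_div, div_le_iff₀ (by positivity)]
    gcongr
    linarith
  refine ⟨C / (LinfNorm (f + g) + 1), by positivity, max (dsupp (f + g)) T, le_max_left _ _,
    fun t ht x hx => ?_⟩
  obtain ⟨hlower, hrt, ht0⟩ := hT t ((le_max_right _ _).trans ht)
  calc C / (LinfNorm (f + g) + 1) * t ^ (-(n : ℝ) / 2) * LinfNorm (f + g)
      = C / (LinfNorm (f + g) + 1) * LinfNorm (f + g) * t ^ (-(n : ℝ) / 2) := by ring
    _ ≤ C * t ^ (-(n : ℝ) / 2) := by gcongr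
    _ ≤ u x t := hlower x ((mem_closedBall_zero_iff.1 (hr hx)).trans hrt)

/-- There exist `C > 0` and `T ≥ d_h` such that for all `t ≥ T`,
`inf_{x ∈ CS(h)} u(x,t) ≥ C t^{-n/2} ‖h‖_{L^∞}`, where `h = f + g`. -/
theorem lower_bound_on_convex_hull (n : ℕ) (hn : 1 ≤ n)
    (f g : EuclideanSpace ℝ (Fin n) → ℝ)
    (hf : ContDiff ℝ (⊤ : ℕ∞) f) (hg : ContDiff ℝ (⊤ : ℕ∞) g)
    (hfc : HasCompactSupport f) (hgc : HasCompactSupport g)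
    (hne : f + g ≠ 0) (hpos : ∀ x, 0 ≤ f x + g x)
    (u : EuclideanSpace ℝ (Fin n) → ℝ → ℝ)
    (hreg : ContDiffOn ℝ 2 (fun p : EuclideanSpace ℝ (Fin n) × ℝ => u p.1 p.2) (univ ×ˢ Ici 0))
    (hpde : ∀ x, ∀ t > (0 : ℝ),
      deriv (deriv (fun s => u x s)) t - lap (fun z => u z t) x
        + deriv (fun s => u x s) t = 0)
    (hu0 : ∀ x, u x 0 = f x)
    (hu1 : ∀ x, derivWithin (fun s => u x s) (Ici 0) 0 = g x) :
    ∃ C > (0 : ℝ), ∃ T, dsupp (f + g) ≤ T ∧ ∀ t ≥ T, ∀ x ∈ CS (f + g),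
      C * t ^ (-(n : ℝ) / 2) * LinfNorm (f + g) ≤ u x t := by
  have hsc : HasCompactSupport (f + g) := hfc.add hgc
  obtain ⟨x, hx⟩ := Function.ne_iff.1 hne
  have hint : 0 < ∫ x, (f x + g x) :=
    (hf.continuous.add hg.continuous).integral_pos_of_hasCompactSupport_nonneg_nonzero hsc hpos hx
  exact lower_bound_on_convex_hull_general hfc hgc (DampedWave.integrable_fourier_ofReal hf hfc)
    (DampedWave.integrable_fourier_ofReal hg hgc) hint
    (isBounded_convexHull.2 hsc.isCompact.isBounded) u hreg hpde hu0 hu1
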